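/- arXiv:2412.07139 — 3 statements merged into one kernel-verified Lean document; each statement's English description precedes it below -/
import Mathlib

section
/- Let n ≥ 2. An operator Y : 𝒫ⁿ → ℝⁿ is a simple, continuous (with respect to the Hausdorff metric) and SL(n) covariant valuation if and only if there exists a constant c ∈ ℝ such that Y(Q) = c m(Q) for all Q ∈ 𝒫ⁿ. -/
open MeasureTheory Filter Set Topology TopologicalSpace
open scoped ENNReal

noncomputable section

/-- `ℝⁿ` with the Euclidean norm. -/
abbrev En (n : ℕ) := EuclideanSpace ℝ (Fin n)

/-- `φ : ℝ → ℝ` is a Young function (viewed as a function on `[0,∞)`):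
`φ t = ∫₀ᵗ ψ(s) ds` for a non-decreasing, right-continuous `ψ` with `ψ 0 = 0`,
`ψ s > 0` for `s > 0` and `ψ s → ∞` as `s → ∞`. -/
def IsYoung (φ : ℝ → ℝ) : Prop :=
  ∃ ψ : ℝ → ℝ, (∀ s : ℝ, 0 ≤ s → 0 ≤ ψ s) ∧ MonotoneOn ψ (Set.Ici 0) ∧
    (∀ s : ℝ, 0 ≤ s → ContinuousWithinAt ψ (Set.Ici s) s) ∧
    ψ 0 = 0 ∧ (∀ s : ℝ, 0 < s → 0 < ψ s) ∧
    Tendsto ψ atTop atTop ∧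
    (∀ t : ℝ, 0 ≤ t → φ t = ∫ s in (0:ℝ)..t, ψ s)

/-- The complementary Young function `φ*(t) = sup_{s ≥ 0} (s t − φ s)`. -/
def conjYoung (φ : ℝ → ℝ) (t : ℝ) : ℝ :=
  sSup {y : ℝ | ∃ s : ℝ, 0 ≤ s ∧ y = s * t - φ s}

/-- The measure `μₙ(M) = ∫_M |x| dx`. -/
def mun {n : ℕ} (M : Set (En n)) : ℝ≥0∞ :=
  ∫⁻ x in M, ENNReal.ofReal ‖x‖

/-- Membership in the Orlicz space `L^φ(ℝⁿ, |x|dx)`: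
`h` is measurable and `∫ φ(δ|h(x)|)|x| dx < ∞` for every `δ > 0`. -/
def MemOrlicz {n : ℕ} (φ : ℝ → ℝ) (h : En n → ℝ) : Prop :=
  Measurable h ∧ ∀ δ : ℝ, 0 < δ →
    ∫⁻ x : En n, ENNReal.ofReal (φ (δ * |h x|)) * ENNReal.ofReal ‖x‖ < ⊤

/-- The Orlicz norm
`‖h‖_φ = sup { ∫ |h g| |x| dx : g measurable, ∫ φ*(|g|)|x| dx ≤ 1 }` (valued in `[0,∞]`). -/
def orliczNorm {n : ℕ} (φ : ℝ → ℝ) (h : En n → ℝ) : ℝ≥0∞ :=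
  ⨆ g ∈ {g : En n → ℝ | Measurable g ∧
      ∫⁻ x : En n, ENNReal.ofReal (conjYoung φ |g x|) * ENNReal.ofReal ‖x‖ ≤ 1},
    ∫⁻ x : En n, ENNReal.ofReal |h x * g x| * ENNReal.ofReal ‖x‖

/-- The moment vector `m(Q) = ∫_Q x dx` of a set `Q ⊆ ℝⁿ`. -/
def momentSet {n : ℕ} (Q : Set (En n)) : En n := ∫ x in Q, x

/-- The action of an `n × n` matrix on `ℝⁿ`. -/
def matVec {n : ℕ} (ϑ : Matrix (Fin n) (Fin n) ℝ) (x : En n) : En n :=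
  Matrix.toEuclideanLin ϑ x

/-- A compact convex polytope: the convex hull of a nonempty finite set. -/
def IsPolytope {n : ℕ} (Q : Set (En n)) : Prop :=
  ∃ S : Finset (En n), S.Nonempty ∧ Q = convexHull ℝ (S : Set (En n))

/-- The space of polytopes, topologized via the Hausdorff metric on nonempty
compact subsets of `ℝⁿ`. -/
abbrev PolySp (n : ℕ) := {K : NonemptyCompacts (En n) // IsPolytope (K : Set (En n))}

/-- `Y` is a valuation on polytopes. -/
def IsPolyValuation {n : ℕ} (Y : Set (En n) → En n) : Prop :=
  ∀ Q₁ Q₂ : Set (En n), IsPolytope Q₁ → IsPolytope Q₂ → IsPolytope (Q₁ ∪ Q₂) →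
    IsPolytope (Q₁ ∩ Q₂) → Y Q₁ + Y Q₂ = Y (Q₁ ∪ Q₂) + Y (Q₁ ∩ Q₂)

/-- `Y` is `SL(n)` covariant on polytopes: `Y(ϑ Q) = ϑ (Y Q)` for `det ϑ = 1`. -/
def IsPolySLCovariant {n : ℕ} (Y : Set (En n) → En n) : Prop :=
  ∀ Q : Set (En n), IsPolytope Q → ∀ ϑ : Matrix (Fin n) (Fin n) ℝ, ϑ.det = 1 →
    Y (matVec ϑ '' Q) = matVec ϑ (Y Q)

/-- `Ψ` is a valuation on `L^φ(ℝⁿ, |x|dx)`. -/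
def IsOrliczValuation {n : ℕ} (φ : ℝ → ℝ) (Ψ : (En n → ℝ) → En n) : Prop :=
  ∀ h₁ h₂ : En n → ℝ, MemOrlicz φ h₁ → MemOrlicz φ h₂ →
    Ψ (fun x => max (h₁ x) (h₂ x)) + Ψ (fun x => min (h₁ x) (h₂ x)) = Ψ h₁ + Ψ h₂

/-- `Ψ` is `SL(n)` covariant: `Ψ(h ∘ ϑ⁻¹) = ϑ (Ψ h)` for `det ϑ = 1`. -/
def IsOrliczSLCovariant {n : ℕ} (φ : ℝ → ℝ) (Ψ : (En n → ℝ) → En n) : Prop :=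
  ∀ h : En n → ℝ, MemOrlicz φ h → ∀ ϑ : Matrix (Fin n) (Fin n) ℝ, ϑ.det = 1 →
    Ψ (fun x => h (matVec ϑ⁻¹ x)) = matVec ϑ (Ψ h)

/-- `Ψ` is continuous: `Ψ(h_k) → Ψ(h)` whenever `‖h_k − h‖_φ → 0`. -/
def OrliczContinuous {n : ℕ} (φ : ℝ → ℝ) (Ψ : (En n → ℝ) → En n) : Prop :=
  ∀ (hk : ℕ → En n → ℝ) (h : En n → ℝ), (∀ k, MemOrlicz φ (hk k)) → MemOrlicz φ h →
    Tendsto (fun k => orliczNorm φ (fun x => hk k x - h x)) atTop (𝓝 0) →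
    Tendsto (fun k => Ψ (hk k)) atTop (𝓝 (Ψ h))

/-- `Ψ` identifies functions that agree almost everywhere. -/
def RespectsAE {n : ℕ} (φ : ℝ → ℝ) (Ψ : (En n → ℝ) → En n) : Prop :=
  ∀ h₁ h₂ : En n → ℝ, MemOrlicz φ h₁ → MemOrlicz φ h₂ →
    (∀ᵐ x : En n, h₁ x = h₂ x) → Ψ h₁ = Ψ h₂

/-- The `Δ₂` condition: `φ(2t) ≤ C φ(t)` for all `t ≥ T`. -/
def SatisfiesDelta2 (φ : ℝ → ℝ) : Prop :=
  ∃ T C : ℝ, 0 ≤ T ∧ 0 < C ∧ ∀ t : ℝ, T ≤ t → φ (2 * t) ≤ C * φ t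

/-- A closed cube in `ℝⁿ`: `{x : cᵢ ≤ xᵢ ≤ dᵢ}` with all side lengths equal. -/
def IsClosedCube {n : ℕ} (C : Set (En n)) : Prop :=
  ∃ c d : Fin n → ℝ, (∃ L : ℝ, 0 ≤ L ∧ ∀ i, d i - c i = L) ∧
    C = {x : En n | ∀ i, c i ≤ x i ∧ x i ≤ d i}


theorem mem_hull_two {E : Type*} [AddCommGroup E] [Module ℝ E] {R : Set E} (hR : R.Nonempty)
    (a b x : E) : x ∈ convexHull ℝ (insert a (insert b R)) ↔
      ∃ α β γ : ℝ, 0 ≤ α ∧ 0 ≤ β ∧ 0 ≤ γ ∧ α + β + γ = 1 ∧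
        ∃ r ∈ convexHull ℝ R, x = α • a + β • b + γ • r := by
  constructor
  · intro hx
    rw [convexHull_insert (Set.insert_nonempty _ _), convexHull_insert hR] at hx
    rw [mem_convexJoin] at hx
    obtain ⟨a', ha', y, hy, hxy⟩ := hx
    obtain rfl : a' = a := ha'
    rw [mem_convexJoin] at hy
    obtain ⟨b', hb', r, hr, hy⟩ := hy
    obtain rfl : b' = b := hb'
    obtain ⟨p, q, hp, hq, hpq, rfl⟩ := hxy
    obtain ⟨u, v, hu, hv, huv, rfl⟩ := hy
    refine ⟨p, q * u, q * v, hp, by positivity, by positivity, ?_, r, hr, ?_⟩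
    · have : q * u + q * v = q := by rw [← mul_add, huv, mul_one]
      linarith
    · rw [smul_add, smul_smul, smul_smul, add_assoc]
  · rintro ⟨α, β, γ, h1, h2, h3, h, r, hr, rfl⟩
    have hc := convex_convexHull ℝ (insert a (insert b R))
    have ha : a ∈ convexHull ℝ (insert a (insert b R)) :=
      subset_convexHull ℝ _ (by simp)
    have hb : b ∈ convexHull ℝ (insert a (insert b R)) :=
      subset_convexHull ℝ _ (by simp)
    have hr' : r ∈ convexHull ℝ (insert a (insert b R)) :=
      convexHull_mono (by intro z hz; simp [hz]) hr
    have := hc.sum_mem (t := (Finset.univ : Finset (Fin 3))) (w := ![α, β, γ])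
      (z := ![a, b, r]) (by intro i _; fin_cases i <;> simpa) (by simpa [Fin.sum_univ_three])
      (by intro i _; fin_cases i <;> simpa)
    simpa [Fin.sum_univ_three] using this

theorem hull_cut_union {E : Type*} [AddCommGroup E] [Module ℝ E] {R : Set E} (hR : R.Nonempty)
    (a b p : E) (s : ℝ) (hs0 : 0 < s) (hs1 : s < 1) (hp : p = (1 - s) • a + s • b) :
    convexHull ℝ (insert a (insert p R)) ∪ convexHull ℝ (insert b (insert p R)) =
      convexHull ℝ (insert a (insert b R)) := by
  apply Set.Subset.antisymm
  · rintro x (hx | hx)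
    · rw [mem_hull_two hR] at hx ⊢
      obtain ⟨α, β, γ, h1, h2, h3, h, r, hr, rfl⟩ := hx
      refine ⟨α + β * (1 - s), β * s, γ, by nlinarith, by positivity, h3, by linarith, r, hr, ?_⟩
      rw [hp]; module
    · rw [mem_hull_two hR] at hx ⊢
      obtain ⟨α, β, γ, h1, h2, h3, h, r, hr, rfl⟩ := hx
      refine ⟨β * (1 - s), α + β * s, γ, by nlinarith, by positivity, h3, by linarith, r, hr, ?_⟩
      rw [hp]; module
  · intro x hx
    rw [mem_hull_two hR] at hx
    obtain ⟨α, β, γ, h1, h2, h3, h, r, hr, rfl⟩ := hx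
    have hs1' : 0 < 1 - s := by linarith
    rcases le_total (β * (1 - s)) (α * s) with hle | hle
    · left
      rw [mem_hull_two hR]
      refine ⟨α - β / s * (1 - s), β / s, γ, ?_, by positivity, h3, ?_, r, hr, ?_⟩
      · rw [sub_nonneg, div_mul_eq_mul_div, div_le_iff₀ hs0]; exact hle
      · field_simp; linear_combination s * h
      · rw [hp]
        have : β = β / s * s := by field_simp
        nth_rewrite 1 [this]
        module
    · right
      rw [mem_hull_two hR]
      refine ⟨β - α / (1 - s) * s, α / (1 - s), γ, ?_, by positivity, h3, ?_, r, hr, ?_⟩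
      · rw [sub_nonneg, div_mul_eq_mul_div, div_le_iff₀ hs1']; exact hle
      · field_simp; linear_combination (1 - s) * h
      · rw [hp]
        have : α = α / (1 - s) * (1 - s) := by field_simp
        nth_rewrite 1 [this]
        module

theorem affine_zero_hull {E : Type*} [AddCommGroup E] [Module ℝ E] {R : Set E}
    (f : E →ᵃ[ℝ] ℝ) (hf : ∀ r ∈ R, f r = 0) : ∀ x ∈ convexHull ℝ R, f x = 0 := by
  intro x hx
  have hc : Convex ℝ (f ⁻¹' {0}) := (convex_singleton 0).affine_preimage f
  exact convexHull_min (fun r hr => hf r hr) hc hx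

theorem affine_comb3 {E : Type*} [AddCommGroup E] [Module ℝ E] (f : E →ᵃ[ℝ] ℝ)
    (a b c : E) (α β γ : ℝ) (h : α + β + γ = 1) :
    f (α • a + β • b + γ • c) = α * f a + β * f b + γ * f c := by
  have h0 : ∀ y, f y = f.linear y + f 0 := fun y => by
    have := f.map_vadd 0 y
    simpa using this
  rw [h0, h0 a, h0 b, h0 c]
  simp only [map_add, map_smul, smul_eq_mul]
  linear_combination (-f 0) * h

theorem hull_cut_inter {E : Type*} [AddCommGroup E] [Module ℝ E] {R : Set E} (hR : R.Nonempty)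
    (a b p : E) (f : E →ᵃ[ℝ] ℝ) (hf : ∀ r ∈ R, f r = 0) (hfp : f p = 0) (hfa : 0 < f a)
    (hfb : f b < 0) :
    convexHull ℝ (insert a (insert p R)) ∩ convexHull ℝ (insert b (insert p R)) =
      convexHull ℝ (insert p R) := by
  apply Set.Subset.antisymm
  · rintro x ⟨hx, hx'⟩
    rw [mem_hull_two hR] at hx hx'
    obtain ⟨α, β, γ, h1, h2, h3, h, r, hr, rfl⟩ := hx
    obtain ⟨α', β', γ', h1', h2', h3', h', r', hr', he⟩ := hx'
    have e := congrArg f he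
    rw [affine_comb3 _ _ _ _ _ _ _ h, affine_comb3 _ _ _ _ _ _ _ h', hfp,
      affine_zero_hull f hf r hr, affine_zero_hull f hf r' hr'] at e
    have hα : α = 0 := by
      by_contra hne
      have : 0 < α := lt_of_le_of_ne h1 (Ne.symm hne)
      nlinarith [mul_pos this hfa, mul_nonneg h1' (neg_nonneg.2 hfb.le)]
    subst hα
    have hc := convex_convexHull ℝ (insert p R)
    have hp : p ∈ convexHull ℝ (insert p R) := subset_convexHull ℝ _ (by simp)
    have hr2 : r ∈ convexHull ℝ (insert p R) := convexHull_mono (Set.subset_insert _ _) hr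
    rw [zero_smul, zero_add]
    exact hc hp hr2 h2 h3 (by linarith)
  · exact Set.subset_inter (convexHull_mono (Set.subset_insert _ _))
      (convexHull_mono (Set.subset_insert _ _))

theorem isPolytope_hull {n : ℕ} {S : Set (En n)} (hS : S.Finite) (hne : S.Nonempty) :
    IsPolytope (convexHull ℝ S) := by
  refine ⟨hS.toFinset, ?_, ?_⟩
  · simpa using hne
  · simp

/-- Edge cut for valuations. -/
theorem edge_cut {n : ℕ} {Y : Set (En n) → En n} (hY : IsPolyValuation Y) {R : Set (En n)}
    (hRf : R.Finite) (hR : R.Nonempty) (a b p : En n) (s : ℝ) (hs0 : 0 < s) (hs1 : s < 1)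
    (hp : p = (1 - s) • a + s • b)
    (f : En n →ᵃ[ℝ] ℝ) (hf : ∀ r ∈ R, f r = 0) (hfp : f p = 0) (hfa : 0 < f a) (hfb : f b < 0) :
    Y (convexHull ℝ (insert a (insert p R))) + Y (convexHull ℝ (insert b (insert p R))) =
      Y (convexHull ℝ (insert a (insert b R))) + Y (convexHull ℝ (insert p R)) := by
  have hu := hull_cut_union hR a b p s hs0 hs1 hp
  have hi := hull_cut_inter hR a b p f hf hfp hfa hfb
  have := hY _ _ (isPolytope_hull ((hRf.insert p).insert a) (by simp))
    (isPolytope_hull ((hRf.insert p).insert b) (by simp))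
    (by rw [hu]; exact isPolytope_hull ((hRf.insert b).insert a) (by simp))
    (by rw [hi]; exact isPolytope_hull (hRf.insert p) (by simp))
  rwa [hu, hi] at this

/-- joining a valuation with a fixed point -/
theorem join_valuation {n : ℕ} {Y : Set (En n) → En n} (hY : IsPolyValuation Y) (v : En n) :
    IsPolyValuation (fun Q => Y (convexHull ℝ (insert v Q))) := by
  have key : ∀ Q : Set (En n), IsPolytope Q → IsPolytope (convexHull ℝ (insert v Q)) := by
    rintro _ ⟨S, hS, rfl⟩
    have : convexHull ℝ (insert v (convexHull ℝ (S : Set (En n)))) =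
        convexHull ℝ (insert v (S : Set (En n))) := by
      have := convexHull_convexHull_union_right (𝕜 := ℝ) {v} (S : Set (En n))
      simpa [Set.singleton_union] using this
    rw [this]
    exact isPolytope_hull (S.finite_toSet.insert v) (by simp)
  have basics : ∀ Q : Set (En n), IsPolytope Q → Convex ℝ Q ∧ IsClosed Q ∧ Q.Nonempty := by
    rintro _ ⟨S, hS, rfl⟩
    exact ⟨convex_convexHull _ _, (S.finite_toSet.isCompact_convexHull (𝕜 := ℝ)).isClosed,
      by simpa using hS⟩
  have mem : ∀ Q : Set (En n), IsPolytope Q → ∀ x, x ∈ convexHull ℝ (insert v Q) ↔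
      ∃ q ∈ Q, x ∈ segment ℝ v q := by
    intro Q hQ x
    obtain ⟨hc, -, hne⟩ := basics Q hQ
    rw [convexHull_insert hne, hc.convexHull_eq, mem_convexJoin]
    simp
  intro A B hA hB hU hI
  have h1 : convexHull ℝ (insert v A) ∪ convexHull ℝ (insert v B) =
      convexHull ℝ (insert v (A ∪ B)) := by
    ext x
    simp only [Set.mem_union, mem _ hA, mem _ hB, mem _ hU]
    aesop
  have h2 : convexHull ℝ (insert v A) ∩ convexHull ℝ (insert v B) =
      convexHull ℝ (insert v (A ∩ B)) := by
    ext x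
    simp only [Set.mem_inter_iff, mem _ hA, mem _ hB, mem _ hI]
    constructor
    · rintro ⟨⟨a, ha, hxa⟩, ⟨b, hb, hxb⟩⟩
      by_cases hxv : x = v
      · obtain ⟨c, hc⟩ := (basics _ hI).2.2
        exact ⟨c, hc, by rw [hxv]; exact left_mem_segment ℝ v c⟩
      have hpre : IsPreconnected (segment ℝ a b) := (convex_segment a b).isPreconnected
      have hsub : segment ℝ a b ⊆ A ∪ B :=
        (basics _ hU).1.segment_subset (Or.inl ha) (Or.inr hb)
      obtain ⟨c, hcs, hcA, hcB⟩ := isPreconnected_closed_iff.1 hpre A B (basics _ hA).2.1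
        (basics _ hB).2.1 hsub ⟨a, left_mem_segment ℝ a b, ha⟩ ⟨b, right_mem_segment ℝ a b, hb⟩
      refine ⟨c, ⟨hcA, hcB⟩, ?_⟩
      obtain ⟨p, s, hp, hs, hps, rfl⟩ := hxa
      obtain ⟨q, t, hq, ht, hqt, he⟩ := hxb
      obtain ⟨k, l, hk, hl, hkl, rfl⟩ := hcs
      have hs' : 0 < s := by
        refine lt_of_le_of_ne hs (fun h => hxv ?_)
        subst h
        have : p = 1 := by linarith
        simp [this]
      have ht' : 0 < t := by
        refine lt_of_le_of_ne ht (fun h => hxv ?_)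
        subst h
        have : q = 1 := by linarith
        rw [← he]
        simp [this]
      have hu : 0 < k * t + l * s := by
        rcases eq_or_lt_of_le hk with h | h
        · have : l = 1 := by linarith
          subst h; rw [this]; linarith
        · have := mul_pos h ht'
          nlinarith [mul_nonneg hl hs]
      have hle : s * t ≤ k * t + l * s := by
        have : s ≤ 1 := by linarith
        have : t ≤ 1 := by linarith
        nlinarith [mul_nonneg hk ht, mul_nonneg hl hs, mul_nonneg (mul_nonneg hk ht)
          (by linarith : 0 ≤ 1 - s), mul_nonneg (mul_nonneg hl hs) (by linarith : 0 ≤ 1 - t)]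
      refine ⟨1 - s * t / (k * t + l * s), s * t / (k * t + l * s), ?_, by positivity, by ring, ?_⟩
      · rw [sub_nonneg, div_le_one hu]; exact hle
      · have e2 : t • b = p • v + s • a - q • v := by rw [← he]; abel
        have e3 : b = t⁻¹ • (p • v + s • a - q • v) := by
          rw [← e2, smul_smul, inv_mul_cancel₀ ht'.ne', one_smul]
        have hp' : p = 1 - s := by linarith
        have hq' : q = 1 - t := by linarith
        have hk' : k = 1 - l := by linarith
        rw [e3, hp', hq']
        have hz : s * t / (k * t + l * s) * (k * t + l * s) = s * t := div_mul_cancel₀ _ hu.ne'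
        generalize s * t / (k * t + l * s) = z at hz ⊢
        match_scalars
        · field_simp
          linear_combination (-1) * hz + (z * t) * hk'
        · field_simp
          linear_combination hz
    · rintro ⟨c, hc, hx⟩
      exact ⟨⟨c, hc.1, hx⟩, ⟨c, hc.2, hx⟩⟩
  have := hY _ _ (key _ hA) (key _ hB) (by rw [h1]; exact key _ hU) (by rw [h2]; exact key _ hI)
  simp only
  rw [this, h1, h2]


theorem affInd_fintype {E ι : Type*} [AddCommGroup E] [Module ℝ E] [Fintype ι] (t : ι → E) :
    AffineIndependent ℝ t ↔ ∀ w : ι → ℝ, ∑ i, w i = 0 → ∑ i, w i • t i = 0 → ∀ i, w i = 0 := by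
  classical
  rw [affineIndependent_iff]
  constructor
  · intro h w h1 h2 i
    exact h Finset.univ w h1 h2 i (Finset.mem_univ i)
  · intro h s w h1 h2 i hi
    have := h (fun i => if i ∈ s then w i else 0) (by simpa using h1) (by simpa [ite_smul] using h2) i
    simpa [hi] using this

theorem affInd_update {E ι : Type*} [AddCommGroup E] [Module ℝ E] [Fintype ι] [DecidableEq ι]
    {t : ι → E} (ht : AffineIndependent ℝ t) (a : ι → ℝ) (ha : ∑ i, a i = 1) (j : ι)
    (hj : a j ≠ 0) (v : E) (hv : v = ∑ i, a i • t i) :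
    AffineIndependent ℝ (Function.update t j v) := by
  rw [affInd_fintype] at ht ⊢
  intro w h1 h2
  have e : ∀ i, w i • Function.update t j v i =
      (if i = j then 0 else w i) • t i + (if i = j then w j • v else 0) := by
    intro i
    by_cases h : i = j
    · subst h; simp
    · simp [h]
  have hu := ht (fun i => (if i = j then 0 else w i) + w j * a i) ?_ ?_
  · have hw : w j = 0 := by
      have := hu j
      simpa [hj] using this
    intro i
    by_cases h : i = j
    · rw [h, hw]
    · have := hu i
      simpa [h, hw] using this
  · have h3 : ∀ i, (if i = j then 0 else w i) = w i - (if i = j then w i else 0) := by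
      intro i
      by_cases h : i = j <;> simp [h]
    simp_rw [h3]
    rw [Finset.sum_add_distrib, ← Finset.mul_sum, ha, mul_one, Finset.sum_sub_distrib, h1]
    simp
  · rw [← h2]
    simp_rw [e, add_smul, Finset.sum_add_distrib, mul_smul, ← Finset.smul_sum, ← hv]
    simp

theorem affInd_exists {E ι : Type*} [AddCommGroup E] [Module ℝ E]
    {t : ι → E} (ht : AffineIndependent ℝ t) (c : ι → ℝ) :
    ∃ f : E →ᵃ[ℝ] ℝ, ∀ i, f (t i) = c i := by
  classical
  rcases isEmpty_or_nonempty ι with h | ⟨⟨i0⟩⟩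
  · exact ⟨0, fun i => (h.false i).elim⟩
  have hl := (affineIndependent_iff_linearIndependent_vsub ℝ t i0).1 ht
  let b := Module.Basis.span hl
  let g0 := b.constr ℝ (fun i : {x // x ≠ i0} => c i - c i0)
  obtain ⟨g, hg⟩ := LinearMap.exists_extend g0
  refine ⟨g.toAffineMap.comp ((AffineEquiv.vaddConst ℝ (t i0)).symm.toAffineMap) +
    AffineMap.const ℝ E (c i0), fun i => ?_⟩
  have hgi : ∀ i : {x // x ≠ i0}, g (t i -ᵥ t i0) = c i - c i0 := by
    intro i
    have h1 : g0 (b i) = c i - c i0 := b.constr_basis ℝ _ i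
    rw [← h1, ← hg]
    simp [b, Module.Basis.span_apply]
  by_cases hi : i = i0
  · subst hi; simp
  · have := hgi ⟨i, hi⟩
    simp only [vsub_eq_sub] at this
    simp [this]

theorem radon_step {n : ℕ} (ζ : Set (En n) → En n) (hζ : IsPolyValuation ζ)
    (hs : ∀ (ι : Type) [Fintype ι] [Nonempty ι] (t : ι → En n), AffineIndependent ℝ t →
      ζ (convexHull ℝ (range t)) = 0) :
    ∀ (N : ℕ) (ι : Type) [Fintype ι] (t : ι → En n) (a : ι → ℝ), AffineIndependent ℝ t →
      ∑ i, a i = 1 → (Finset.univ.filter (fun i => 0 < a i)).card ≤ N →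
      ζ (convexHull ℝ (insert (∑ i, a i • t i) (range t))) = 0 := by
  classical
  intro N
  induction N with
  | zero =>
    intro ι _ t a ht ha hN
    exfalso
    have : ∀ i, a i ≤ 0 := by
      intro i
      by_contra h
      have : i ∈ Finset.univ.filter (fun i => 0 < a i) := by simpa using h
      rw [Nat.le_zero, Finset.card_eq_zero] at hN
      rw [hN] at this
      simp at this
    have := Finset.sum_nonpos (fun i (_ : i ∈ Finset.univ) => this i)
    linarith
  | succ N ih =>
    intro ι _ t a ht ha hN
    set v := ∑ i, a i • t i with hv
    obtain ⟨j, hj⟩ : ∃ j, 0 < a j := by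
      by_contra! h
      have := Finset.sum_nonpos (fun i (_ : i ∈ Finset.univ) => h i)
      linarith
    by_cases hone : ∃ i, i ≠ j ∧ 0 < a i
    · obtain ⟨i, hij, hi⟩ := hone
      set p := (a j / (a i + a j)) • t j + (a i / (a i + a j)) • t i with hp
      set s := a j / (a i + a j) with hsdef
      have hs0 : 0 < s := by positivity
      have hs1 : s < 1 := by rw [hsdef, div_lt_one (by positivity)]; linarith
      have hs' : a i / (a i + a j) = 1 - s := by rw [hsdef]; field_simp; ring
      rw [hs'] at hp
      set R : Set (En n) := insert v (t '' {i, j}ᶜ) with hR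
      have hRf : R.Finite := (Set.toFinite _).insert v
      obtain ⟨f, hf⟩ := affInd_exists ht (fun k => if k = i then a j else if k = j then - a i else 0)
      have hfi : f (t i) = a j := by simp [hf]
      have hfj : f (t j) = - a i := by simp [hf, hij.symm]
      have hflin : ∀ y, f y = f.linear y + f 0 := fun y => by
        have := f.map_vadd 0 y
        simpa using this
      have hfc : ∀ (κ : Type) [Fintype κ] (w : κ → ℝ) (q : κ → En n), ∑ k, w k = 1 →
          f (∑ k, w k • q k) = ∑ k, w k * f (q k) := by
        intro κ _ w q hw
        simp_rw [hflin (q _), mul_add, Finset.sum_add_distrib, ← Finset.sum_mul, hw, one_mul]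
        rw [hflin, map_sum]
        simp
      have hfv : f v = 0 := by
        rw [hv, hfc _ _ _ ha]
        simp_rw [hf]
        rw [Finset.sum_eq_add i j hij (by intro k _ hk; simp [hk.1, hk.2]) (by simp) (by simp)]
        simp [hij.symm]
        ring
      have hfp : f p = 0 := by
        have := affine_comb3 f (t i) (t j) (t j) (1 - s) s 0 (by ring)
        have e : p = (1 - s) • t i + s • t j + (0 : ℝ) • t j := by rw [hp]; module
        rw [e, this, hfi, hfj]
        rw [← hs', hsdef]; field_simp; ring
      have hfR : ∀ r ∈ R, f r = 0 := by
        rintro r (rfl | ⟨k, hk, rfl⟩)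
        · exact hfv
        · have h1 : k ≠ i := fun h => hk (by simp [h])
          have h2 : k ≠ j := fun h => hk (by simp [h])
          simp [hf, h1, h2]
      have cut := edge_cut hζ hRf (Set.insert_nonempty _ _) (t i) (t j) p s hs0 hs1
        (by rw [hp]; module) f hfR hfp (by rw [hfi]; exact hj) (by rw [hfj]; linarith)
      have main : ∀ i j : ι, i ≠ j → 0 < a i → 0 < a j →
          p = (a j / (a i + a j)) • t j + (a i / (a i + a j)) • t i →
          AffineIndependent ℝ (Function.update t j p) ∧
          v = ∑ k, (Function.update (Function.update a i 0) j (a i + a j)) k •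
            Function.update t j p k ∧
          ∑ k, (Function.update (Function.update a i 0) j (a i + a j)) k = 1 ∧
          (Finset.univ.filter (fun k => 0 < (Function.update (Function.update a i 0) j
            (a i + a j)) k)).card ≤ N := by
        intro i j hij hi hj hp
        have hsum : ∀ g : ι → ℝ, ∑ k, g k = ∑ k ∈ (Finset.univ.erase i).erase j, g k + g j + g i := by
          intro g
          rw [Finset.sum_erase_add _ _ (by simp [hij.symm]), Finset.sum_erase_add _ _ (by simp)]
        have hsum' : ∀ g : ι → En n,
            ∑ k, g k = ∑ k ∈ (Finset.univ.erase i).erase j, g k + g j + g i := by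
          intro g
          rw [Finset.sum_erase_add _ _ (by simp [hij.symm]), Finset.sum_erase_add _ _ (by simp)]
        refine ⟨?_, ?_, ?_, ?_⟩
        · refine affInd_update ht (Function.update (Function.update 0 i (a i / (a i + a j))) j
            (a j / (a i + a j))) ?_ j ?_ p ?_
          · rw [hsum]
            rw [Finset.sum_eq_zero (fun k hk => by
              have h1 : k ≠ j := Finset.ne_of_mem_erase hk
              have h2 : k ≠ i := Finset.ne_of_mem_erase (Finset.mem_of_mem_erase hk)
              simp [h1, h2])]
            simp [hij]
            field_simp
            ring
          · simp; constructor <;> positivity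
          · rw [hsum']
            rw [Finset.sum_eq_zero (fun k hk => by
              have h1 : k ≠ j := Finset.ne_of_mem_erase hk
              have h2 : k ≠ i := Finset.ne_of_mem_erase (Finset.mem_of_mem_erase hk)
              simp [h1, h2])]
            simp [hij, hp]
        · rw [hv, hsum', hsum' (fun k => (Function.update (Function.update a i 0) j (a i + a j)) k •
            Function.update t j p k)]
          have : ∑ k ∈ (Finset.univ.erase i).erase j,
              (Function.update (Function.update a i 0) j (a i + a j)) k •
                Function.update t j p k = ∑ k ∈ (Finset.univ.erase i).erase j, a k • t k := by
            refine Finset.sum_congr rfl (fun k hk => ?_)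
            have h1 : k ≠ j := Finset.ne_of_mem_erase hk
            have h2 : k ≠ i := Finset.ne_of_mem_erase (Finset.mem_of_mem_erase hk)
            simp [h1, h2]
          rw [this]
          simp [hij, hp, smul_smul]
          have h0 : a i + a j ≠ 0 := by positivity
          rw [mul_div_cancel₀ _ h0, mul_div_cancel₀ _ h0]
          abel
        · rw [hsum]
          rw [hsum] at ha
          rw [← ha]
          have : ∑ k ∈ (Finset.univ.erase i).erase j,
              (Function.update (Function.update a i 0) j (a i + a j)) k
                = ∑ k ∈ (Finset.univ.erase i).erase j, a k := by
            refine Finset.sum_congr rfl (fun k hk => ?_)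
            have h1 : k ≠ j := Finset.ne_of_mem_erase hk
            have h2 : k ≠ i := Finset.ne_of_mem_erase (Finset.mem_of_mem_erase hk)
            simp [h1, h2]
          rw [this]
          simp [hij]
          ring
        · have hsub : (Finset.univ.filter (fun k => 0 < (Function.update (Function.update a i 0) j
            (a i + a j)) k)) ⊆ (Finset.univ.filter (fun k => 0 < a k)).erase i := by
            intro k hk
            simp only [Finset.mem_filter, Finset.mem_univ, true_and] at hk
            have hki : k ≠ i := by
              rintro rfl
              simp [hij] at hk
            simp only [Finset.mem_erase, Finset.mem_filter, Finset.mem_univ, true_and]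
            refine ⟨hki, ?_⟩
            by_cases hkj : k = j
            · rw [hkj]; exact hj
            · simpa [hkj, hki] using hk
          have h1 := Finset.card_le_card hsub
          rw [Finset.card_erase_of_mem (by simpa using hi)] at h1
          omega
      have himg : ∀ i j : ι, i ≠ j → insert (t i) (insert p (insert v (t '' {i, j}ᶜ))) =
          insert v (range (Function.update t j p)) := by
        intro i j hij
        ext x
        simp only [Set.mem_insert_iff, Set.mem_image, Set.mem_range, Set.mem_compl_iff,
          Set.mem_singleton_iff]
        constructor
        · rintro (rfl | rfl | rfl | ⟨k, hk, rfl⟩)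
          · right; exact ⟨i, by simp [hij]⟩
          · right; exact ⟨j, by simp⟩
          · left; rfl
          · right
            have hkj : k ≠ j := fun h => hk (Or.inr h)
            exact ⟨k, by simp [hkj]⟩
        · rintro (rfl | ⟨k, rfl⟩)
          · simp
          · by_cases hkj : k = j
            · subst hkj; simp
            · by_cases hki : k = i
              · subst hki; simp [hkj]
              · right; right; right
                exact ⟨k, by simp [hki, hkj]⟩
      have m1 := main i j hij.symm.symm hi hj (by rw [hp, hs'])
      have m2 := main j i hij.symm hj hi (by rw [hp, add_comm (a j), hs', hsdef]; abel)
      have z1 : ζ (convexHull ℝ (insert (t i) (insert p R))) = 0 := by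
        have := ih ι _ _ m1.1 m1.2.2.1 m1.2.2.2
        rw [← m1.2.1] at this
        rw [hR, himg i j hij]
        exact this
      have z2 : ζ (convexHull ℝ (insert (t j) (insert p R))) = 0 := by
        have := ih ι _ _ m2.1 m2.2.2.1 m2.2.2.2
        rw [← m2.2.1] at this
        rw [hR, Set.pair_comm, himg j i hij.symm]
        exact this
      have z3 : ζ (convexHull ℝ (insert p R)) = 0 := by
        set a' := Function.update (Function.update a i 0) j (a i + a j) with ha'
        have hai : a' i = 0 := by simp [ha', hij]
        have hsum : ∑ k : {k // k ≠ i}, a' k = 1 := by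
          rw [← m1.2.2.1, ← Finset.sum_erase_add _ _ (Finset.mem_univ i), hai, add_zero]
          rw [Finset.sum_subtype (p := fun k => k ≠ i) _ (by simp)]
        have hvv : v = ∑ k : {k // k ≠ i}, a' k • Function.update t j p k := by
          rw [m1.2.1, ← Finset.sum_erase_add _ _ (Finset.mem_univ i), hai, zero_smul, add_zero]
          rw [Finset.sum_subtype (p := fun k => k ≠ i) _ (by simp)]
        have := ih {k // k ≠ i} (fun k => Function.update t j p k) (fun k => a' k)
          (m1.1.subtype {k | k ≠ i}) hsum (by
            refine le_trans ?_ m1.2.2.2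
            refine Finset.card_le_card_of_injOn (fun k => k.1) ?_ (by
              intro x _ y _ h; exact Subtype.ext h)
            intro k hk
            simpa using hk)
        rw [← hvv] at this
        have e : insert p R = insert v (range (fun k : {k // k ≠ i} => Function.update t j p k)) := by
          rw [hR]
          ext x
          simp only [Set.mem_insert_iff, Set.mem_image, Set.mem_range, Set.mem_compl_iff,
            Set.mem_singleton_iff]
          constructor
          · rintro (rfl | rfl | ⟨k, hk, rfl⟩)
            · right; exact ⟨⟨j, hij.symm⟩, by simp⟩
            · left; rfl
            · right
              have hkj : k ≠ j := fun h => hk (Or.inr h)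
              exact ⟨⟨k, fun h => hk (Or.inl h)⟩, by simp [hkj]⟩
          · rintro (rfl | ⟨⟨k, hki⟩, rfl⟩)
            · simp
            · by_cases hkj : k = j
              · subst hkj; simp
              · right; right
                exact ⟨k, by simp [hki, hkj]⟩
        rw [e]
        exact this
      have himg0 : insert (t i) (insert (t j) R) = insert v (range t) := by
        rw [hR]
        ext x
        simp only [Set.mem_insert_iff, Set.mem_image, Set.mem_range, Set.mem_compl_iff,
            Set.mem_singleton_iff]
        constructor
        · rintro (rfl | rfl | rfl | ⟨k, hk, rfl⟩)
          · right; exact ⟨i, rfl⟩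
          · right; exact ⟨j, rfl⟩
          · left; rfl
          · right; exact ⟨k, rfl⟩
        · rintro (rfl | ⟨k, rfl⟩)
          · simp
          · by_cases hkj : k = j
            · subst hkj; simp
            · by_cases hki : k = i
              · subst hki; simp
              · right; right; right
                exact ⟨k, by simp [hki, hkj]⟩
      rw [z1, z2, z3, himg0] at cut
      simpa using cut.symm
    · push Not at hone
      have e : convexHull ℝ (insert v (range t)) = convexHull ℝ (range (Function.update t j v)) := by
        apply Set.Subset.antisymm
        · apply convexHull_min _ (convex_convexHull _ _)
          have hv' : v ∈ convexHull ℝ (range (Function.update t j v)) :=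
            subset_convexHull ℝ _ ⟨j, by simp⟩
          have hk : ∀ k, k ≠ j → t k ∈ convexHull ℝ (range (Function.update t j v)) :=
            fun k hk => subset_convexHull ℝ _ ⟨k, by simp [hk]⟩
          rintro x (rfl | ⟨k, rfl⟩)
          · exact hv'
          · by_cases hkj : k = j
            · subst hkj
              have hsum := Finset.sum_erase_add _ a (Finset.mem_univ k)
              have hsumv := Finset.sum_erase_add _ (fun i => a i • t i) (Finset.mem_univ k)
              rw [ha] at hsum
              rw [← hv] at hsumv
              have ht' : t k = ∑ l, (if l = k then (a k)⁻¹ else - (a l) * (a k)⁻¹) •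
                  Function.update t k v l := by
                rw [← Finset.sum_erase_add _ _ (Finset.mem_univ k)]
                rw [Finset.sum_congr rfl (g := fun l => (- (a k)⁻¹) • (a l • t l)) (fun l hl => by
                  have : l ≠ k := Finset.ne_of_mem_erase hl
                  simp only [this, if_false, Function.update_of_ne this, smul_smul, ne_eq,
                    not_false_eq_true]
                  congr 1; ring)]
                rw [← Finset.smul_sum]
                simp only [if_true, Function.update_self]
                rw [← hsumv, smul_add, smul_smul, inv_mul_cancel₀ hj.ne']
                module
              rw [ht']
              refine (convex_convexHull ℝ _).sum_mem ?_ ?_ ?_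
              · intro l _
                by_cases hl : l = k
                · simp [hl, hj.le]
                · simp only [hl, if_false]
                  exact mul_nonneg (neg_nonneg.2 (hone l hl)) (inv_nonneg.2 hj.le)
              · rw [← Finset.sum_erase_add _ _ (Finset.mem_univ k)]
                rw [Finset.sum_congr rfl (g := fun l => (- (a k)⁻¹) * a l) (fun l hl => by
                  have : l ≠ k := Finset.ne_of_mem_erase hl
                  simp only [this, if_false]
                  ring)]
                rw [← Finset.mul_sum]
                simp only [if_true]
                have : ∑ l ∈ Finset.univ.erase k, a l = 1 - a k := by linarith
                rw [this]
                field_simp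
                ring
              · intro l _
                exact subset_convexHull ℝ _ ⟨l, rfl⟩
            · exact hk k hkj
        · apply convexHull_mono
          rintro x ⟨k, rfl⟩
          by_cases hkj : k = j
          · subst hkj; simp
          · simp [hkj]
      rw [e]
      have : Nonempty ι := ⟨j⟩
      exact hs ι _ (affInd_update ht a ha j hj.ne' v hv)

/-- A valuation vanishing on all simplices vanishes on all polytopes. -/
theorem vanish_of_simplices {n : ℕ} : ∀ (S : Finset (En n)) (_ : S.Nonempty)
    (ζ : Set (En n) → En n) (_ : IsPolyValuation ζ)
    (_ : ∀ (ι : Type) [Fintype ι] [Nonempty ι] (t : ι → En n), AffineIndependent ℝ t →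
      ζ (convexHull ℝ (range t)) = 0), ζ (convexHull ℝ (S : Set (En n))) = 0 := by
  classical
  intro S hS
  induction hS using Finset.Nonempty.cons_induction with
  | singleton a =>
    intro ζ hζ hs
    have := hs Unit (fun _ => a) (affineIndependent_of_subsingleton ℝ _)
    simpa using this
  | cons v S hv hS ih =>
    intro ζ hζ hs
    have h := ih (fun Q => ζ (convexHull ℝ (insert v Q))) (join_valuation hζ v) ?_
    · have e : convexHull ℝ (insert v (convexHull ℝ (S : Set (En n)))) =
        convexHull ℝ (insert v (S : Set (En n))) := by
        have := convexHull_convexHull_union_right (𝕜 := ℝ) {v} (S : Set (En n))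
        simpa [Set.singleton_union] using this
      simp only [e] at h
      simpa using h
    · intro ι _ _ t ht
      have e : convexHull ℝ (insert v (convexHull ℝ (range t))) =
        convexHull ℝ (insert v (range t)) := by
        have := convexHull_convexHull_union_right (𝕜 := ℝ) {v} (range t)
        simpa [Set.singleton_union] using this
      simp only [e]
      by_cases hvs : v ∈ affineSpan ℝ (range t)
      · obtain ⟨w, hw, hv⟩ := eq_affineCombination_of_mem_affineSpan_of_fintype hvs
        rw [Finset.affineCombination_eq_linear_combination _ _ _ hw] at hv
        rw [hv]
        exact radon_step ζ hζ hs _ ι t w ht hw le_rfl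
      · have hai : AffineIndependent ℝ (fun o : Option ι => o.elim v t) := by
          refine AffineIndependent.affineIndependent_of_notMem_span (i := none) ?_ ?_
          · let emb : {y : Option ι // y ≠ none} ↪ ι :=
              ⟨fun y => y.1.get (Option.isSome_iff_ne_none.2 y.2), by
                rintro ⟨x, hx⟩ ⟨y, hy⟩ h
                cases x with
                | none => exact (hx rfl).elim
                | some x =>
                  cases y with
                  | none => exact (hy rfl).elim
                  | some y =>
                    have : x = y := h
                    subst this
                    rfl⟩
            have := ht.comp_embedding emb
            have e3 : (fun x : {y : Option ι // y ≠ none} => (x.1).elim v t) = t ∘ emb := by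
              funext y
              obtain ⟨y, hy⟩ := y
              cases y with
              | none => exact (hy rfl).elim
              | some y => rfl
            rw [e3]
            exact this
          · intro hmem
            apply hvs
            refine affineSpan_mono ℝ ?_ hmem
            rintro x ⟨y, hy, rfl⟩
            cases y with
            | none => exact (hy rfl).elim
            | some y => exact ⟨y, rfl⟩
        have := hs (Option ι) _ hai
        have e2 : range (fun o : Option ι => o.elim v t) = insert v (range t) := by
          ext x
          simp [Option.exists, eq_comm]
        rwa [e2] at this


theorem polytope_basics {n : ℕ} {Q : Set (En n)} (hQ : IsPolytope Q) :
    Convex ℝ Q ∧ IsCompact Q ∧ Q.Nonempty := by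
  obtain ⟨S, hS, rfl⟩ := hQ
  exact ⟨convex_convexHull _ _, (S.finite_toSet.isCompact_convexHull (𝕜 := ℝ)),
      by simpa using hS⟩

theorem integrableOn_id {n : ℕ} {Q : Set (En n)} (hQ : IsCompact Q) :
    IntegrableOn (fun x : En n => x) Q :=
  continuous_id.continuousOn.integrableOn_compact hQ

theorem moment_simple {n : ℕ} (hn : 2 ≤ n) (Q : Set (En n))
    (h : Module.finrank ℝ (vectorSpan ℝ Q) ≤ n - 1) : momentSet Q = 0 := by
  have h1 : affineSpan ℝ Q ≠ ⊤ := by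
    intro ht
    have : (affineSpan ℝ Q).direction = ⊤ := by rw [ht, AffineSubspace.direction_top]
    rw [direction_affineSpan] at this
    rw [this, finrank_top, finrank_euclideanSpace_fin] at h
    omega
  have h2 : volume (affineSpan ℝ Q : Set (En n)) = 0 := Measure.addHaar_affineSubspace _ _ h1
  have h3 : volume Q = 0 := measure_mono_null (subset_affineSpan ℝ Q) h2
  unfold momentSet
  rw [Measure.restrict_eq_zero.2 h3, integral_zero_measure]

theorem moment_valuation {n : ℕ} : IsPolyValuation (momentSet (n := n)) := by
  intro A B hA hB _ _
  have hA' := (polytope_basics hA).2.1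
  have hB' := (polytope_basics hB).2.1
  unfold momentSet
  have mA := hA'.measurableSet
  have mB := hB'.measurableSet
  have iA := (integrableOn_id hA').integrable_indicator mA
  have iB := (integrableOn_id hB').integrable_indicator mB
  have iU := (integrableOn_id (hA'.union hB')).integrable_indicator (mA.union mB)
  have iI := (integrableOn_id (hA'.inter_right hB'.isClosed)).integrable_indicator (mA.inter mB)
  rw [← integral_indicator mA, ← integral_indicator mB, ← integral_indicator (mA.union mB),
    ← integral_indicator (mA.inter mB), ← integral_add iA iB, ← integral_add iU iI]
  congr 1
  exact (Set.indicator_union_add_inter (fun x : En n => x) A B).symm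

theorem moment_covariant {n : ℕ} : IsPolySLCovariant (momentSet (n := n)) := by
  intro Q hQ ϑ hϑ
  have hQ' := (polytope_basics hQ).2.1
  have hdet : LinearMap.det (Matrix.toEuclideanLin ϑ) = 1 := by
    rw [Matrix.toEuclideanLin, Matrix.toLpLin_eq_toLin, LinearMap.det_toLin, hϑ]
  let L : En n →L[ℝ] En n := LinearMap.toContinuousLinearMap (Matrix.toEuclideanLin ϑ)
  have hinj : Function.Injective (Matrix.toEuclideanLin ϑ) := by
    rw [← LinearMap.ker_eq_bot]
    by_contra hne
    have := LinearMap.det_eq_zero_iff_ker_ne_bot.2 hne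
    rw [hdet] at this
    exact one_ne_zero this
  have := integral_image_eq_integral_abs_det_fderiv_smul (μ := volume) (s := Q) (f := L)
    (f' := fun _ => L) hQ'.measurableSet (fun x _ => L.hasFDerivAt.hasFDerivWithinAt)
    (hinj.injOn) (fun x : En n => x)
  have hd : L.det = 1 := by
    rw [ContinuousLinearMap.det]
    exact hdet
  unfold momentSet
  have e : matVec ϑ '' Q = L '' Q := rfl
  rw [e, this]
  simp only [hd, abs_one, one_smul]
  rw [L.integral_comp_comm (integrableOn_id hQ')]
  rfl

theorem inner_stable {n : ℕ} {K K' : Set (En n)} (hc : Convex ℝ K') (hcl : IsClosed K')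
    (x : En n) (r : ℝ) (hr : Metric.ball x r ⊆ K)
    (hd : ∀ z ∈ K, ∃ y ∈ K', dist z y < r / 2) (hr0 : 0 < r) : x ∈ K' := by
  by_contra hx
  obtain ⟨f, u, hfu, hfx⟩ := geometric_hahn_banach_closed_point hc hcl hx
  set w := (InnerProductSpace.toDual ℝ (En n)).symm f with hw
  have hfw : ∀ y, f y = inner ℝ w y := fun y => by
    rw [hw, InnerProductSpace.toDual_symm_apply]
  obtain ⟨y0, hy0, -⟩ := hd x (hr (Metric.mem_ball_self hr0))
  have hw0 : w ≠ 0 := by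
    intro h
    have h1 := hfu y0 hy0
    rw [hfw, h, inner_zero_left] at h1
    rw [hfw, h, inner_zero_left] at hfx
    linarith
  have hwn : 0 < ‖w‖ := norm_pos_iff.2 hw0
  obtain ⟨y, hy, hzy⟩ := hd (x + (r / 2 / ‖w‖) • w) (hr (by
    rw [Metric.mem_ball, dist_eq_norm, add_sub_cancel_left, norm_smul, Real.norm_eq_abs,
      abs_of_pos (by positivity)]
    field_simp
    linarith))
  have h1 := hfu y hy
  have h2 : inner ℝ w (x + (r / 2 / ‖w‖) • w - y) ≤ ‖w‖ * ‖x + (r / 2 / ‖w‖) • w - y‖ :=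
    real_inner_le_norm _ _
  rw [dist_eq_norm] at hzy
  rw [inner_sub_right, inner_add_right, inner_smul_right, real_inner_self_eq_norm_sq,
    ← hfw, ← hfw] at h2
  have h3 : r / 2 / ‖w‖ * ‖w‖ ^ 2 = ‖w‖ * (r / 2) := by field_simp
  rw [h3] at h2
  have h4 := mul_lt_mul_of_pos_left hzy hwn
  linarith

theorem moment_continuous {n : ℕ} :
    Continuous (fun K : PolySp n => momentSet (K.1 : Set (En n))) := by
  rw [continuous_iff_continuousAt]
  intro K
  have hKb := polytope_basics K.2
  have hclose : ∀ ε : ℝ, 0 < ε → ∀ᶠ K' : PolySp n in 𝓝 K,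
      (∀ z ∈ (K.1 : Set (En n)), ∃ y ∈ (K'.1 : Set (En n)), dist z y < ε) ∧
      (∀ z ∈ (K'.1 : Set (En n)), ∃ y ∈ (K.1 : Set (En n)), dist z y < ε) := by
    intro ε hε
    filter_upwards [Metric.ball_mem_nhds K hε] with K' hK'
    have hK2 : Metric.hausdorffDist (K'.1 : Set (En n)) (K.1 : Set (En n)) < ε := by
      have : dist K'.1 K.1 < ε := hK'
      rwa [Metric.NonemptyCompacts.dist_eq] at this
    have hfin : Metric.hausdorffEDist (K'.1 : Set (En n)) (K.1 : Set (En n)) ≠ ⊤ :=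
      Metric.hausdorffEDist_ne_top_of_nonempty_of_bounded K'.1.nonempty K.1.nonempty
        K'.1.isCompact.isBounded K.1.isCompact.isBounded
    constructor
    · intro z hz
      obtain ⟨y, hy, h⟩ := Metric.exists_dist_lt_of_hausdorffDist_lt' hz hK2 hfin
      exact ⟨y, hy, by rwa [dist_comm]⟩
    · intro z hz
      exact Metric.exists_dist_lt_of_hausdorffDist_lt hz hK2 hfin
  have hmeas : ∀ K' : PolySp n, MeasurableSet (K'.1 : Set (En n)) :=
    fun K' => K'.1.isCompact.measurableSet
  unfold ContinuousAt momentSet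
  simp_rw [← integral_indicator (hmeas _)]
  obtain ⟨B, hB⟩ := hKb.2.1.isBounded.exists_norm_le
  refine tendsto_integral_filter_of_dominated_convergence
    ((Metric.closedBall (0 : En n) (B + 1)).indicator (fun _ => B + 1)) ?_ ?_ ?_ ?_
  · exact Eventually.of_forall (fun K' =>
      (continuous_id.stronglyMeasurable.indicator (hmeas K')).aestronglyMeasurable)
  · filter_upwards [hclose 1 one_pos] with K' hK'
    refine Eventually.of_forall (fun x => ?_)
    by_cases hx : x ∈ (K'.1 : Set (En n))
    · obtain ⟨y, hy, hxy⟩ := hK'.2 x hx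
      have hn : ‖x‖ ≤ B + 1 := by
        have h1 := hB y hy
        rw [dist_eq_norm] at hxy
        have := norm_add_le (x - y) y
        rw [sub_add_cancel] at this
        linarith
      have hx2 : x ∈ Metric.closedBall (0 : En n) (B + 1) := by simpa using hn
      rw [Set.indicator_of_mem hx, Set.indicator_of_mem hx2]
      exact hn
    · rw [Set.indicator_of_notMem hx, norm_zero]
      apply Set.indicator_nonneg
      intro z hz
      have : ‖z‖ ≤ B + 1 := by simpa using hz
      exact (norm_nonneg z).trans this
  · rw [integrable_indicator_iff measurableSet_closedBall]
    exact integrableOn_const (measure_closedBall_lt_top.ne)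
  · have hfr : volume (frontier (K.1 : Set (En n))) = 0 := hKb.1.addHaar_frontier volume
    have hae : ∀ᵐ x : En n, x ∉ frontier (K.1 : Set (En n)) := by
      rw [ae_iff]; simpa using hfr
    filter_upwards [hae] with x hx
    by_cases hxK : x ∈ (K.1 : Set (En n))
    · have hxi : x ∈ interior (K.1 : Set (En n)) := by
        by_contra h
        exact hx ⟨subset_closure hxK, h⟩
      obtain ⟨r, hr0, hr⟩ := Metric.isOpen_iff.1 isOpen_interior x hxi
      have hev : ∀ᶠ K' : PolySp n in 𝓝 K, x ∈ (K'.1 : Set (En n)) := by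
        filter_upwards [hclose (r / 2) (by positivity)] with K' hK'
        exact inner_stable (polytope_basics K'.2).1 (polytope_basics K'.2).2.1.isClosed x r
          (hr.trans interior_subset) hK'.1 hr0
      refine tendsto_const_nhds.congr' ?_
      filter_upwards [hev] with K' hK'
      rw [Set.indicator_of_mem hxK, Set.indicator_of_mem hK']
    · have hopen : (K.1 : Set (En n))ᶜ ∈ 𝓝 x := hKb.2.1.isClosed.isOpen_compl.mem_nhds hxK
      obtain ⟨r, hr0, hr⟩ := Metric.mem_nhds_iff.1 hopen
      have hev : ∀ᶠ K' : PolySp n in 𝓝 K, x ∉ (K'.1 : Set (En n)) := by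
        filter_upwards [hclose r hr0] with K' hK' hmem
        obtain ⟨y, hy, hxy⟩ := hK'.2 x hmem
        exact hr (by rwa [Metric.mem_ball, dist_comm]) hy
      refine tendsto_const_nhds.congr' ?_
      filter_upwards [hev] with K' hK'
      rw [Set.indicator_of_notMem hxK, Set.indicator_of_notMem hK']


/-- A valuation vanishing on lower dimensional polytopes. -/
def SimpleVal {n : ℕ} (Z : Set (En n) → En n) : Prop :=
  ∀ Q : Set (En n), IsPolytope Q → Module.finrank ℝ (vectorSpan ℝ Q) ≤ n - 1 → Z Q = 0

theorem finrank_of_affine {n : ℕ} {Q : Set (En n)} (f : En n →ᵃ[ℝ] ℝ)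
    (hf : ∀ x ∈ Q, f x = 0) {a : En n} (ha : f a ≠ 0) (hne : Q.Nonempty) :
    Module.finrank ℝ (vectorSpan ℝ Q) ≤ n - 1 := by
  have hle : vectorSpan ℝ Q ≤ LinearMap.ker f.linear := by
    unfold vectorSpan
    rw [Submodule.span_le]
    rintro _ ⟨x, hx, y, hy, rfl⟩
    simp only [SetLike.mem_coe, LinearMap.mem_ker]
    rw [AffineMap.linearMap_vsub, hf x hx, hf y hy]
    simp
  have hlt : LinearMap.ker f.linear < ⊤ := by
    rw [lt_top_iff_ne_top]
    intro h
    obtain ⟨q, hq⟩ := hne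
    have : a -ᵥ q ∈ LinearMap.ker f.linear := by rw [h]; trivial
    rw [LinearMap.mem_ker, AffineMap.linearMap_vsub, hf q hq] at this
    exact ha (by simpa using this)
  have h1 := Submodule.finrank_mono hle
  have h2 := Submodule.finrank_lt (lt_top_iff_ne_top.1 hlt)
  rw [finrank_euclideanSpace_fin] at h2
  omega

theorem range_split {α ι : Type*} [DecidableEq ι] (t : ι → α) {i j : ι} (hij : i ≠ j) (u : ι → α)
    (hu : ∀ k, k ≠ i → k ≠ j → u k = t k) :
    range u = insert (u i) (insert (u j) (t '' {k | k ≠ i ∧ k ≠ j})) := by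
  ext x
  simp only [mem_range, mem_insert_iff, mem_image, mem_ofPred_eq]
  constructor
  · rintro ⟨k, rfl⟩
    by_cases h1 : k = i
    · left; rw [h1]
    · by_cases h2 : k = j
      · right; left; rw [h2]
      · right; right; exact ⟨k, ⟨h1, h2⟩, (hu k h1 h2).symm⟩
  · rintro (h | h | ⟨k, ⟨h1, h2⟩, h⟩)
    · exact ⟨i, h.symm⟩
    · exact ⟨j, h.symm⟩
    · exact ⟨k, by rw [hu k h1 h2, h]⟩

theorem simplex_cut {n : ℕ} (hn : 2 ≤ n) {Z : Set (En n) → En n} (hZ : IsPolyValuation Z)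
    (hs : SimpleVal Z) {t : Fin (n + 1) → En n} (ht : AffineIndependent ℝ t)
    {i j : Fin (n + 1)} (hij : i ≠ j) {s : ℝ} (hs0 : 0 < s) (hs1 : s < 1) (p : En n)
    (hp : p = (1 - s) • t i + s • t j) :
    Z (convexHull ℝ (range t)) = Z (convexHull ℝ (range (Function.update t j p))) +
      Z (convexHull ℝ (range (Function.update t i p))) := by
  classical
  obtain ⟨f, hf⟩ := affInd_exists ht (fun k => if k = i then s else if k = j then -(1 - s) else 0)
  set R := t '' {k | k ≠ i ∧ k ≠ j} with hR
  have hRf : R.Finite := Set.toFinite _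
  have hRne : R.Nonempty := by
    have : ∃ k : Fin (n+1), k ∉ ({i, j} : Finset (Fin (n+1))) := by
      by_contra h
      push Not at h
      have h1 : (Finset.univ : Finset (Fin (n+1))) ⊆ {i, j} := fun k _ => h k
      have h2 := Finset.card_le_card h1
      have h3 := Finset.card_le_two (a := i) (b := j)
      simp at h2
      omega
    obtain ⟨k, hk⟩ := this
    simp at hk
    exact ⟨t k, k, hk, rfl⟩
  have hfR : ∀ r ∈ R, f r = 0 := by
    rintro _ ⟨k, ⟨h1, h2⟩, rfl⟩
    rw [hf]; simp [h1, h2]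
  have hfi : f (t i) = s := by rw [hf]; simp
  have hfj : f (t j) = -(1 - s) := by rw [hf]; simp [hij.symm]
  have hfp : f p = 0 := by
    have : p = AffineMap.lineMap (t i) (t j) s := by rw [hp, AffineMap.lineMap_apply_module]
    rw [this, AffineMap.apply_lineMap, hfi, hfj, AffineMap.lineMap_apply_module]
    simp; ring
  have key := edge_cut hZ hRf hRne (t i) (t j) p s hs0 hs1 hp f hfR hfp (by rw [hfi]; exact hs0)
    (by rw [hfj]; linarith)
  have e1 := range_split t hij t (fun _ _ _ => rfl)
  have e2 := range_split t hij (Function.update t j p) (fun k h1 h2 => by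
    rw [Function.update_of_ne h2])
  have e3 := range_split t hij.symm (Function.update t i p) (fun k h1 h2 => by
    rw [Function.update_of_ne h2])
  rw [Function.update_self, Function.update_of_ne hij] at e2
  rw [Function.update_self, Function.update_of_ne hij.symm] at e3
  have e4 : {k | k ≠ j ∧ k ≠ i} = {k | k ≠ i ∧ k ≠ j} := by ext k; simp [and_comm]
  rw [e4] at e3
  rw [e1, e2, e3]
  have h0 : Z (convexHull ℝ (insert p R)) = 0 := by
    refine hs _ (isPolytope_hull (hRf.insert p) (insert_nonempty _ _)) ?_
    refine finrank_of_affine f (affine_zero_hull f ?_) (a := t i) (by rw [hfi]; exact hs0.ne') ?_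
    · rintro r (rfl | hr)
      · exact hfp
      · exact hfR r hr
    · exact (insert_nonempty p R).convexHull
  rw [h0, add_zero] at key
  exact key.symm

/-- Vanishing on full simplices with a vertex at the origin implies vanishing on full simplices. -/
theorem vanish_full_aux {n : ℕ} (hn : 2 ≤ n) {Z : Set (En n) → En n} (hZ : IsPolyValuation Z)
    (hs : SimpleVal Z)
    (h0 : ∀ t : Fin (n + 1) → En n, AffineIndependent ℝ t → (∃ i, t i = 0) →
      Z (convexHull ℝ (range t)) = 0) :
    ∀ (N : ℕ) (t : Fin (n + 1) → En n) (a : Fin (n + 1) → ℝ), AffineIndependent ℝ t →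
      ∑ i, a i = 1 → ∑ i, a i • t i = 0 → (Finset.univ.filter (fun i => a i ≠ 0)).card ≤ N →
      Z (convexHull ℝ (range t)) = 0 := by
  classical
  intro N
  induction N with
  | zero =>
    intro t a _ h1 _ hc
    exfalso
    have : ∀ i, a i = 0 := by
      intro i
      by_contra h
      have : 0 < (Finset.univ.filter (fun i => a i ≠ 0)).card :=
        Finset.card_pos.2 ⟨i, Finset.mem_filter.2 ⟨Finset.mem_univ i, h⟩⟩
      omega
    simp [this] at h1
  | succ N ih =>
    intro t a ht h1 h2 hc
    by_cases hsame : ∃ i j, i ≠ j ∧ 0 < a i * a j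
    · obtain ⟨i, j, hij, hpos⟩ := hsame
      have hi : a i ≠ 0 := left_ne_zero_of_mul hpos.ne'
      have hj : a j ≠ 0 := right_ne_zero_of_mul hpos.ne'
      have hsum : a i + a j ≠ 0 := by
        intro h
        have : a j = - a i := by linarith
        rw [this] at hpos
        nlinarith [mul_self_nonneg (a i)]
      set s := a j / (a i + a j) with hsdef
      have hsq : s = a j * (a i + a j) / (a i + a j) ^ 2 := by rw [hsdef]; field_simp
      have hsq' : 1 - s = a i * (a i + a j) / (a i + a j) ^ 2 := by rw [hsdef]; field_simp; ring
      have hs0 : 0 < s := by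
        rw [hsq]; apply div_pos _ (by positivity)
        nlinarith [mul_self_nonneg (a j)]
      have hs1 : s < 1 := by
        have : 0 < 1 - s := by
          rw [hsq']; apply div_pos _ (by positivity)
          nlinarith [mul_self_nonneg (a i)]
        linarith
      set p := (1 - s) • t i + s • t j with hp
      have hps : (a i + a j) • p = a i • t i + a j • t j := by
        rw [hp, smul_add, smul_smul, smul_smul]
        congr 2
        · rw [hsdef]; field_simp; ring
        · rw [hsdef]; field_simp
      rw [simplex_cut hn hZ hs ht hij hs0 hs1 p hp]
      have step : ∀ i j : Fin (n+1), i ≠ j → a i ≠ 0 → a j ≠ 0 →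
          (∃ s : ℝ, s ≠ 0 ∧ p = (1 - s) • t i + s • t j) →
          (a i + a j) • p = a i • t i + a j • t j → 
          Z (convexHull ℝ (range (Function.update t j p))) = 0 := by
        rintro i j hij hi hj ⟨s, hs0, hp⟩ hps
        refine ih (Function.update t j p)
          (Function.update (Function.update a i 0) j (a i + a j)) ?_ ?_ ?_ ?_
        · refine affInd_update ht (fun k => if k = i then 1 - s else if k = j then s else 0) ?_ j
            ?_ p ?_
          · rw [Finset.sum_eq_add i j hij]
            · simp [hij.symm]
            · intro k _ hk; simp [hk.1, hk.2]
            · simp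
            · simp
          · simpa [hij.symm] using hs0
          · rw [Finset.sum_eq_add i j hij]
            · simp [hij.symm, hp]
            · intro k _ hk; simp [hk.1, hk.2]
            · simp
            · simp
        · rw [← h1, ← Finset.add_sum_erase _ _ (Finset.mem_univ j),
            ← Finset.add_sum_erase _ a (Finset.mem_univ j),
            ← Finset.add_sum_erase _ _ (Finset.mem_erase.2 ⟨hij, Finset.mem_univ i⟩),
            ← Finset.add_sum_erase _ a (Finset.mem_erase.2 ⟨hij, Finset.mem_univ i⟩)]
          have : ∀ k ∈ (Finset.univ.erase j).erase i,
              Function.update (Function.update a i 0) j (a i + a j) k = a k := by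
            intro k hk
            simp only [Finset.mem_erase] at hk
            rw [Function.update_of_ne hk.2.1, Function.update_of_ne hk.1]
          rw [Finset.sum_congr rfl this]
          simp [hij]
          ring
        · rw [← h2, ← Finset.add_sum_erase _ _ (Finset.mem_univ j),
            ← Finset.add_sum_erase _ (fun i => a i • t i) (Finset.mem_univ j),
            ← Finset.add_sum_erase _ _ (Finset.mem_erase.2 ⟨hij, Finset.mem_univ i⟩),
            ← Finset.add_sum_erase _ (fun i => a i • t i)
              (Finset.mem_erase.2 ⟨hij, Finset.mem_univ i⟩)]
          have : ∀ k ∈ (Finset.univ.erase j).erase i,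
              Function.update (Function.update a i 0) j (a i + a j) k • Function.update t j p k
                = a k • t k := by
            intro k hk
            simp only [Finset.mem_erase] at hk
            rw [Function.update_of_ne hk.2.1, Function.update_of_ne hk.1,
              Function.update_of_ne hk.2.1]
          rw [Finset.sum_congr rfl this]
          simp only [Function.update_self, Function.update_of_ne hij]
          rw [hps, zero_smul]
          abel
        · have hlt : (Finset.univ.filter (fun k =>
              Function.update (Function.update a i 0) j (a i + a j) k ≠ 0)).card <
              (Finset.univ.filter (fun i => a i ≠ 0)).card := by
            apply Finset.card_lt_card
            rw [Finset.ssubset_iff_of_subset]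
            · refine ⟨i, by simp [hi], ?_⟩
              simp [hij]
            · intro k hk
              simp only [Finset.mem_filter, Finset.mem_univ, true_and] at hk ⊢
              by_cases hkj : k = j
              · rw [hkj]; exact hj
              · rw [Function.update_of_ne hkj] at hk
                by_cases hki : k = i
                · rw [hki]; exact hi
                · rwa [Function.update_of_ne hki] at hk
          omega
      rw [step i j hij hi hj ⟨s, hs0.ne', hp⟩ hps,
        step j i hij.symm hj hi ⟨1 - s, by linarith, by rw [hp]; module⟩ (by
          rw [add_comm, hps, add_comm]), add_zero]
    · push Not at hsame
      obtain ⟨i, hi⟩ : ∃ i, 0 < a i := by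
        by_contra h
        push Not at h
        have := Finset.sum_nonpos (fun i (_ : i ∈ Finset.univ) => h i)
        linarith
      have hother : ∀ k, k ≠ i → a k ≤ 0 := by
        intro k hk
        have := hsame i k (Ne.symm hk)
        by_contra hpos
        push Not at hpos
        have := mul_pos hi hpos
        linarith
      by_cases hneg : ∃ j, a j < 0
      · obtain ⟨j, hj⟩ := hneg
        have hij : i ≠ j := by rintro rfl; linarith
        have hrest : ∀ k, k ≠ i → k ≠ j → a k = 0 := by
          intro k h1 h2
          have hk := hother k h1
          by_contra hne
          have : a k < 0 := lt_of_le_of_ne hk hne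
          have := mul_pos_of_neg_of_neg this hj
          have := hsame k j h2
          linarith
        have hs1 : a i + a j = 1 := by
          rw [← h1, Finset.sum_eq_add i j hij]
          · intro k _ hk; exact hrest k hk.1 hk.2
          · simp
          · simp
        have hs2 : a i • t i + a j • t j = 0 := by
          rw [← h2, Finset.sum_eq_add i j hij]
          · intro k _ hk; rw [hrest k hk.1 hk.2, zero_smul]
          · simp
          · simp
        set T' := Function.update t i 0 with hT'
        have hT'i : AffineIndependent ℝ T' := affInd_update ht a h1 i hi.ne' 0 h2.symm
        have hi1 : 1 < a i := by linarith
        have hti : t i = (-a j / a i) • t j := by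
          have : a i • t i = (- a j) • t j := by
            rw [neg_smul]; exact eq_neg_of_add_eq_zero_left hs2
          rw [div_eq_inv_mul, mul_smul, ← this, smul_smul, inv_mul_cancel₀ hi.ne', one_smul]
        have hcut := simplex_cut hn hZ hs hT'i hij (s := -a j / a i)
          (div_pos (by linarith) hi) (by rw [div_lt_one hi]; linarith) (t i) (by
            rw [hT', Function.update_self, Function.update_of_ne hij.symm, smul_zero, zero_add]
            exact hti)
        have e1 : Function.update T' i (t i) = t := by simp [hT']
        rw [e1, h0 T' hT'i ⟨i, by simp [hT']⟩] at hcut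
        rw [h0 (Function.update T' j (t i)) ?_ ⟨i, by
          rw [Function.update_of_ne hij, hT', Function.update_self]⟩, zero_add] at hcut
        · exact hcut.symm
        · refine affInd_update hT'i
            (fun k => if k = i then 1 - (-a j / a i) else if k = j then -a j / a i else 0)
            ?_ j ?_ _ ?_
          · rw [Finset.sum_eq_add i j hij]
            · simp [hij.symm]
            · intro k _ hk; simp [hk.1, hk.2]
            · simp
            · simp
          · simp [hij.symm, hi.ne', hj.ne]
          · rw [Finset.sum_eq_add i j hij]
            · simp only [if_true, if_neg hij.symm]
              rw [hT', Function.update_self, Function.update_of_ne hij.symm, smul_zero, zero_add]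
              exact hti
            · intro k _ hk; simp [hk.1, hk.2]
            · simp
            · simp
      · push Not at hneg
        have hz : ∀ k, k ≠ i → a k = 0 := fun k hk => le_antisymm (hother k hk) (hneg k)
        have h3 : a i • t i = 0 := by
          rw [← h2, Finset.sum_eq_single i]
          · intro k _ hk; rw [hz k hk, zero_smul]
          · simp
        exact h0 t ht ⟨i, (smul_eq_zero.1 h3).resolve_left hi.ne'⟩

theorem vanish_full {n : ℕ} (hn : 2 ≤ n) {Z : Set (En n) → En n} (hZ : IsPolyValuation Z)
    (hs : SimpleVal Z)
    (h0 : ∀ t : Fin (n + 1) → En n, AffineIndependent ℝ t → (∃ i, t i = 0) →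
      Z (convexHull ℝ (range t)) = 0) (t : Fin (n + 1) → En n) (ht : AffineIndependent ℝ t) :
      Z (convexHull ℝ (range t)) = 0 := by
  have htop : affineSpan ℝ (range t) = ⊤ := by
    rw [ht.affineSpan_eq_top_iff_card_eq_finrank_add_one]
    simp
  let b : AffineBasis (Fin (n+1)) ℝ (En n) := ⟨t, ht, htop⟩
  refine vanish_full_aux hn hZ hs h0 _ t (fun i => b.coord i 0) ht
    (b.sum_coord_apply_eq_one 0) (b.linear_combination_coord_eq_self 0) le_rfl

theorem vanish_all {n : ℕ} (hn : 2 ≤ n) {Z : Set (En n) → En n} (hZ : IsPolyValuation Z)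
    (hs : SimpleVal Z)
    (h0 : ∀ t : Fin (n + 1) → En n, AffineIndependent ℝ t → (∃ i, t i = 0) →
      Z (convexHull ℝ (range t)) = 0) (Q : Set (En n)) (hQ : IsPolytope Q) : Z Q = 0 := by
  obtain ⟨S, hS, rfl⟩ := hQ
  refine vanish_of_simplices S hS Z hZ ?_
  intro ι _ _ t ht
  have hv : vectorSpan ℝ (convexHull ℝ (range t)) = vectorSpan ℝ (range t) := by
    rw [← direction_affineSpan, affineSpan_convexHull, direction_affineSpan]
  by_cases hc : Fintype.card ι = n + 1
  · let e : Fin (n+1) ≃ ι := (Fintype.equivFinOfCardEq hc).symm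
    have := vanish_full hn hZ hs h0 (t ∘ e) (ht.comp_embedding e.toEmbedding)
    rwa [e.surjective.range_comp] at this
  · refine hs _ (isPolytope_hull (finite_range t) (range_nonempty t)) ?_
    rw [hv]
    have hc0 : 0 < Fintype.card ι := Fintype.card_pos
    obtain ⟨k, hk⟩ : ∃ k, Fintype.card ι = k + 1 := ⟨Fintype.card ι - 1, by omega⟩
    have h1 := ht.finrank_vectorSpan hk
    have h2 := Submodule.finrank_le (vectorSpan ℝ (range t))
    rw [finrank_euclideanSpace_fin] at h2
    omega

theorem additive_pos {h : ℝ → ℝ} (hc : ContinuousOn h (Ioi 0))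
    (ha : ∀ x y : ℝ, 0 < x → 0 < y → h (x + y) = h x + h y) (t : ℝ) (ht : 0 < t) :
    h t = t * h 1 := by
  have e : ∀ x : ℝ, 0 < |x| + 1 + x := fun x => by have := neg_abs_le x; linarith
  have e' : ∀ x : ℝ, 0 < |x| + 1 := fun x => by positivity
  let H : ℝ →+ ℝ := AddMonoidHom.mk' (fun x => h (|x| + 1 + x) - h (|x| + 1)) (by
    intro x y
    have h1 := ha _ _ (e (x + y)) (e' x)
    have h2 := ha _ _ (add_pos (e (x + y)) (e' x)) (e' y)
    have h3 := ha _ _ (e' (x + y)) (e x)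
    have h4 := ha _ _ (add_pos (e' (x + y)) (e x)) (e y)
    have h5 : |x + y| + 1 + (x + y) + (|x| + 1) + (|y| + 1) =
      |x + y| + 1 + (|x| + 1 + x) + (|y| + 1 + y) := by ring
    rw [h5] at h2
    linarith)
  have hH : ∀ t : ℝ, 0 < t → H t = h t := by
    intro t ht
    change h (|t| + 1 + t) - h (|t| + 1) = h t
    rw [ha _ _ (e' t) ht]; ring
  have hcH : Continuous H := by
    change Continuous (fun x => h (|x| + 1 + x) - h (|x| + 1))
    refine Continuous.sub ?_ ?_
    · exact hc.comp_continuous (by fun_prop) e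
    · exact hc.comp_continuous (by fun_prop) e'
  have := map_real_smul H hcH t 1
  rw [smul_eq_mul, smul_eq_mul, mul_one, hH t ht, hH 1 one_pos] at this
  exact this

theorem func_eq {α β : ℝ → ℝ} (hα : Continuous (fun t => t * α t)) (hβ : Continuous β)
    (hβ0 : β 0 = 0) (hα1 : α 1 = 0)
    (hA : ∀ x y : ℝ, 0 < x → 0 < y →
      (x + y) * α (x + y) = (x + y) * α x + y * (β x + α y))
    (hB : ∀ x y : ℝ, 0 < x → 0 < y →
      (x + y) * β (x + y) = (x + y) * β y + x * (β x + α y)) :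
    ∀ t : ℝ, 0 < t → α t = 0 ∧ β t = 0 := by
  have hαc : ContinuousOn α (Ioi 0) := by
    have : ContinuousOn (fun t => t⁻¹ * (t * α t)) (Ioi 0) :=
      (continuousOn_id.inv₀ (fun x hx => (ne_of_gt hx))).mul hα.continuousOn
    refine this.congr ?_
    intro t ht
    have : t ≠ 0 := ne_of_gt ht
    simp only
    field_simp
  have hC := additive_pos (h := fun t => α t + β t) (hαc.add hβ.continuousOn) (by
    intro x y hx hy
    have h1 := hA x y hx hy
    have h2 := hB x y hx hy
    have : x + y ≠ 0 := by positivity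
    apply mul_left_cancel₀ this
    linarith)
  have hF := additive_pos (h := fun t => t * (α t - β t))
    (continuousOn_id.mul (hαc.sub hβ.continuousOn)) (by
    intro x y hx hy
    have h1 := hA x y hx hy
    have h2 := hB x y hx hy
    have h3 := hC x hx
    have h4 := hC y hy
    beta_reduce at h3 h4 ⊢
    have h5 : y * (α x + β x) = x * (α y + β y) := by rw [h3, h4]; ring
    linarith)
  have hE : ∀ t : ℝ, 0 < t → α t - β t = α 1 - β 1 := by
    intro t ht
    have := hF t ht
    have h := mul_left_cancel₀ ht.ne' this
    linarith
  have hβf : ∀ t : ℝ, 0 < t → β t = (t * (α 1 + β 1) - (α 1 - β 1)) / 2 := by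
    intro t ht
    have := hE t ht
    have := hC t ht
    linarith
  have l1 : Tendsto β (𝓝[>] 0) (𝓝 0) := by
    have := hβ.tendsto 0
    rw [hβ0] at this
    exact this.mono_left nhdsWithin_le_nhds
  have l2 : Tendsto (fun t : ℝ => (t * (α 1 + β 1) - (α 1 - β 1)) / 2) (𝓝[>] 0)
      (𝓝 ((0 * (α 1 + β 1) - (α 1 - β 1)) / 2)) := by
    have : Continuous (fun t : ℝ => (t * (α 1 + β 1) - (α 1 - β 1)) / 2) := by fun_prop
    exact (this.tendsto 0).mono_left nhdsWithin_le_nhds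
  have l3 : Tendsto (fun t : ℝ => (t * (α 1 + β 1) - (α 1 - β 1)) / 2) (𝓝[>] 0) (𝓝 0) := by
    refine l1.congr' ?_
    filter_upwards [self_mem_nhdsWithin] with t ht using hβf t ht
  have h0 := tendsto_nhds_unique l2 l3
  have hb1 : β 1 = 0 := by linarith
  intro t ht
  have h1 := hE t ht
  have h2 := hC t ht
  rw [hα1, hb1] at h1 h2
  constructor <;> linarith

theorem hausdorff_hull_le {n : ℕ} {ι : Type*} [Finite ι] [Nonempty ι] (t u : ι → En n) (r : ℝ)
    (hr : 0 ≤ r) (h : ∀ i, dist (t i) (u i) ≤ r) :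
    Metric.hausdorffDist (convexHull ℝ (range t)) (convexHull ℝ (range u)) ≤ r := by
  have key : ∀ t u : ι → En n, (∀ i, dist (t i) (u i) ≤ r) →
      ∀ x ∈ convexHull ℝ (range t), ∃ y ∈ convexHull ℝ (range u), dist x y ≤ r := by
    intro t u h
    have hK : IsCompact (convexHull ℝ (range u)) := (finite_range u).isCompact_convexHull (𝕜 := ℝ)
    have hsub : convexHull ℝ (range t) ⊆ Metric.cthickening r (convexHull ℝ (range u)) := by
      refine convexHull_min ?_ ((convex_convexHull ℝ _).cthickening r)
      rintro _ ⟨i, rfl⟩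
      exact Metric.mem_cthickening_of_dist_le _ (u i) _ _ (subset_convexHull ℝ _ ⟨i, rfl⟩) (h i)
    intro x hx
    have := hsub hx
    rw [hK.cthickening_eq_biUnion_closedBall hr] at this
    simpa using this
  exact Metric.hausdorffDist_le_of_mem_dist hr (key t u h)
    (key u t (fun i => by rw [dist_comm]; exact h i))

/-- The simplex spanned by the origin and `v`. -/
def Sx {n : ℕ} (v : Fin n → En n) : Set (En n) :=
  convexHull ℝ (range (Fin.cons (0 : En n) v : Fin (n + 1) → En n))

theorem isPolytope_Sx {n : ℕ} (v : Fin n → En n) : IsPolytope (Sx v) :=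
  isPolytope_hull (finite_range _) (range_nonempty _)

/-- standard vectors -/
def stdv {n : ℕ} (i : Fin n) : En n := EuclideanSpace.single i (1 : ℝ)

/-- standard vectors with the `i`-th one stretched -/
def vD {n : ℕ} (i : Fin n) (D : ℝ) : Fin n → En n := Function.update stdv i (D • stdv i)

/-- determinant -/
def dt {n : ℕ} : (En n) [⋀^Fin n]→ₗ[ℝ] ℝ := (EuclideanSpace.basisFun (Fin n) ℝ).toBasis.det

theorem continuous_G {n : ℕ} {Z : Set (En n) → En n}
    (hc : Continuous (fun K : PolySp n => Z (K.1 : Set (En n)))) (i : Fin n) :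
    Continuous (fun D : ℝ => Z (Sx (vD i D))) := by
  let K : ℝ → PolySp n := fun D => ⟨⟨⟨Sx (vD i D), (polytope_basics (isPolytope_Sx _)).2.1⟩,
    (polytope_basics (isPolytope_Sx _)).2.2⟩, isPolytope_Sx _⟩
  have hK : Continuous K := by
    refine (LipschitzWith.mk_one ?_ : LipschitzWith 1 K).continuous
    intro D D'
    rw [Subtype.dist_eq, Metric.NonemptyCompacts.dist_eq]
    refine hausdorff_hull_le _ _ _ dist_nonneg ?_
    intro k
    refine Fin.cases ?_ (fun k => ?_) k
    · simp
    · simp only [Fin.cons_succ]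
      unfold vD
      by_cases hk : k = i
      · subst hk
        rw [Function.update_self, Function.update_self, dist_eq_norm, ← sub_smul, norm_smul,
          Real.dist_eq]
        simp [stdv]
      · rw [Function.update_of_ne hk, Function.update_of_ne hk]; simp
  exact hc.comp hK

theorem dt_std {n : ℕ} : dt (stdv (n := n)) = 1 := by
  have : (stdv : Fin n → En n) = (EuclideanSpace.basisFun (Fin n) ℝ).toBasis := by
    ext i j; simp [stdv]
  rw [dt, this, Module.Basis.det_self]

theorem dt_vD {n : ℕ} (i : Fin n) (D : ℝ) : dt (vD i D) = D := by
  rw [vD, AlternatingMap.map_update_smul, Function.update_eq_self, dt_std, smul_eq_mul, mul_one]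

theorem affInd_of_dt {n : ℕ} (v : Fin n → En n) (h : dt v ≠ 0) :
    AffineIndependent ℝ (Fin.cons (0 : En n) v : Fin (n + 1) → En n) := by
  have hl := ((Module.Basis.is_basis_iff_det (EuclideanSpace.basisFun (Fin n) ℝ).toBasis).2
    (isUnit_iff_ne_zero.2 h)).1
  rw [Fintype.linearIndependent_iff] at hl
  rw [affInd_fintype]
  intro w h1 h2
  rw [Fin.sum_univ_succ] at h1 h2
  simp only [Fin.cons_zero, smul_zero, Fin.cons_succ, zero_add] at h2
  have h3 := hl (fun i => w i.succ) h2
  simp only [h3, Finset.sum_const_zero, add_zero] at h1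
  intro i
  refine Fin.cases h1 h3 i

theorem dt_of_affInd {n : ℕ} (t : Fin (n + 1) → En n) (i : Fin (n + 1)) (hi : t i = 0)
    (ht : AffineIndependent ℝ t) : dt (t ∘ i.succAbove) ≠ 0 := by
  rw [affInd_fintype] at ht
  have hl : LinearIndependent ℝ (t ∘ i.succAbove) := by
    rw [Fintype.linearIndependent_iff]
    intro g hg k
    have := ht (Fin.insertNth i (-∑ k, g k) g) (by
      rw [Fin.sum_univ_succAbove _ i]; simp) (by
      rw [Fin.sum_univ_succAbove _ i]; simpa [hi] using hg) (i.succAbove k)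
    simpa using this
  have hsp : Submodule.span ℝ (range (t ∘ i.succAbove)) = ⊤ :=
    hl.span_eq_top_of_card_eq_finrank' (by simp)
  exact ((Module.Basis.is_basis_iff_det (EuclideanSpace.basisFun (Fin n) ℝ).toBasis).1
    ⟨hl, hsp⟩).ne_zero

theorem matVec_cols {n : ℕ} (w : Fin n → En n) (x : En n) :
    matVec ((EuclideanSpace.basisFun (Fin n) ℝ).toBasis.toMatrix w) x = ∑ k, x k • w k := by
  ext i
  simp [matVec, Matrix.toEuclideanLin, Matrix.mulVec, dotProduct, Module.Basis.toMatrix_apply,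
    mul_comm]

/-- coefficients -/
def coefA {n : ℕ} (Z : Set (En n) → En n) (i : Fin n) (k : Fin n) (D : ℝ) : ℝ :=
  (Z (Sx (vD i D))) k * (if k = i then D⁻¹ else 1)

theorem Z_Sx {n : ℕ} {Z : Set (En n) → En n} (hcov : IsPolySLCovariant Z) (i : Fin n)
    (v : Fin n → En n) (hv : dt v ≠ 0) :
    Z (Sx v) = ∑ k, coefA Z i k (dt v) • v k := by
  set D := dt v with hD
  set w := Function.update v i (D⁻¹ • v i) with hw
  set ϑ := (EuclideanSpace.basisFun (Fin n) ℝ).toBasis.toMatrix w with hϑ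
  have hdet : ϑ.det = 1 := by
    have : ϑ.det = dt w := by rw [dt, Module.Basis.det_apply]
    rw [this, hw, AlternatingMap.map_update_smul, Function.update_eq_self, ← hD, smul_eq_mul,
      inv_mul_cancel₀ hv]
  have hwk : ∀ k, matVec ϑ (stdv k) = w k := by
    intro k
    rw [hϑ, matVec_cols]
    simp [stdv]
  have himg : matVec ϑ '' Sx (vD i D) = Sx v := by
    have e : matVec ϑ = (Matrix.toEuclideanLin ϑ : En n → En n) := rfl
    rw [Sx, e, LinearMap.image_convexHull, ← range_comp, Sx]
    congr 2
    funext k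
    refine Fin.cases ?_ (fun k => ?_) k
    · simp
    · simp only [Function.comp, Fin.cons_succ, vD]
      by_cases hk : k = i
      · subst hk
        rw [Function.update_self, map_smul]
        change D • matVec ϑ (stdv k) = v k
        rw [hwk, hw, Function.update_self, smul_smul, mul_inv_cancel₀ hv, one_smul]
      · rw [Function.update_of_ne hk]
        change matVec ϑ (stdv k) = v k
        rw [hwk, hw, Function.update_of_ne hk]
  rw [← himg, hcov _ (isPolytope_Sx _) ϑ hdet, hϑ, matVec_cols]
  refine Finset.sum_congr rfl (fun k _ => ?_)
  unfold coefA
  by_cases hk : k = i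
  · subst hk
    rw [if_pos rfl, hw, Function.update_self, smul_smul]
  · rw [if_neg hk, hw, Function.update_of_ne hk, mul_one]

theorem coef_rel {n : ℕ} (hn : 2 ≤ n) {Z : Set (En n) → En n} (hZ : IsPolyValuation Z)
    (hs : SimpleVal Z) (hcov : IsPolySLCovariant Z) (i j : Fin n) (hij : i ≠ j)
    (x y : ℝ) (hx : 0 < x) (hy : 0 < y) :
    (x + y) * coefA Z i i (x + y) = (x + y) * coefA Z i i x
      + y * (coefA Z i j x + coefA Z i i y) ∧
    (x + y) * coefA Z i j (x + y) = (x + y) * coefA Z i j y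
      + x * (coefA Z i j x + coefA Z i i y) := by
  classical
  have hD0 : x + y ≠ 0 := by positivity
  set s := x / (x + y) with hsdef
  have hsD : s * (x + y) = x := by rw [hsdef]; field_simp
  have hsD' : (1 - s) * (x + y) = y := by rw [sub_mul, hsD]; ring
  have hs0 : 0 < s := by positivity
  have hs1 : s < 1 := by rw [hsdef, div_lt_one (by positivity)]; linarith
  set v := vD i (x + y) with hv
  have hdv : dt v = x + y := dt_vD i _
  set p := (1 - s) • v i + s • v j with hp
  have hcut := simplex_cut hn hZ hs (affInd_of_dt v (by rw [hdv]; exact hD0))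
    (i := i.succ) (j := j.succ) (by simpa using hij) hs0 hs1 p (by simp [hp])
  rw [← Fin.cons_update, ← Fin.cons_update] at hcut
  change Z (Sx v) = Z (Sx (Function.update v j p)) + Z (Sx (Function.update v i p)) at hcut
  have d1 : dt (Function.update v j p) = x := by
    rw [hp, AlternatingMap.map_update_add, AlternatingMap.map_update_smul,
      AlternatingMap.map_update_smul, Function.update_eq_self,
      AlternatingMap.map_update_self _ _ hij.symm, hdv]
    simpa using hsD
  have d2 : dt (Function.update v i p) = y := by
    rw [hp, AlternatingMap.map_update_add, AlternatingMap.map_update_smul,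
      AlternatingMap.map_update_smul, Function.update_eq_self,
      AlternatingMap.map_update_self _ _ hij, hdv]
    simpa using hsD'
  rw [Z_Sx hcov i v (by rw [hdv]; exact hD0), Z_Sx hcov i (Function.update v j p)
    (by rw [d1]; exact hx.ne'), Z_Sx hcov i (Function.update v i p) (by rw [d2]; exact hy.ne'),
    hdv, d1, d2] at hcut
  have hvk : ∀ k, k ≠ i → v k = stdv k := fun k hk => by rw [hv, vD, Function.update_of_ne hk]
  have hvi : v i = (x + y) • stdv i := by rw [hv, vD, Function.update_self]
  have red : ∀ (c : Fin n → ℝ) (u : Fin n → En n), (∀ k, k ≠ i → k ≠ j → u k = stdv k) →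
      (∑ k, c k • u k) i = c i * u i i + c j * u j i ∧
      (∑ k, c k • u k) j = c i * u i j + c j * u j j := by
    intro c u hu
    constructor
    · rw [WithLp.ofLp_sum, Finset.sum_apply, Finset.sum_eq_add i j hij]
      · simp
      · intro k _ hk
        rw [hu k hk.1 hk.2]
        simp [stdv, hk.1.symm]
      · simp
      · simp
    · rw [WithLp.ofLp_sum, Finset.sum_apply, Finset.sum_eq_add i j hij]
      · simp
      · intro k _ hk
        rw [hu k hk.1 hk.2]
        simp [stdv, hk.2.symm]
      · simp
      · simp
  have r0 := red (fun k => coefA Z i k (x + y)) v (fun k hk _ => hvk k hk)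
  have r1 := red (fun k => coefA Z i k x) (Function.update v j p) (fun k hk hk' => by
    rw [Function.update_of_ne hk', hvk k hk])
  have r2 := red (fun k => coefA Z i k y) (Function.update v i p) (fun k hk hk' => by
    rw [Function.update_of_ne hk, hvk k hk])
  rw [Function.update_self, Function.update_of_ne hij] at r1
  rw [Function.update_self, Function.update_of_ne hij.symm] at r2
  have hci := congrArg (fun z : En n => z i) hcut
  have hcj := congrArg (fun z : En n => z j) hcut
  simp only [PiLp.add_apply] at hci hcj
  rw [r0.1, r1.1, r2.1] at hci
  rw [r0.2, r1.2, r2.2] at hcj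
  have pi : p i = y := by
    rw [hp, hvi, hvk j hij.symm]; simp [stdv, hij, hsD']
  have pj : p j = s := by
    rw [hp, hvi, hvk j hij.symm]; simp [stdv, hij.symm]
  have vii : v i i = x + y := by rw [hvi]; simp [stdv]
  have vij : v i j = 0 := by rw [hvi]; simp [stdv, hij.symm]
  have vji : v j i = 0 := by rw [hvk j hij.symm]; simp [stdv, hij]
  have vjj : v j j = 1 := by rw [hvk j hij.symm]; simp [stdv]
  rw [pi, vii, vji] at hci
  rw [pj, vij, vjj] at hcj
  constructor
  · linear_combination hci
  · linear_combination (x + y) * hcj + (coefA Z i j x + coefA Z i i y) * hsD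

theorem coef_zero {n : ℕ} (hn : 2 ≤ n) {Z : Set (En n) → En n}
    (hc : Continuous (fun K : PolySp n => Z (K.1 : Set (En n)))) (hZ : IsPolyValuation Z)
    (hs : SimpleVal Z) (hcov : IsPolySLCovariant Z) (i j : Fin n) (hij : i ≠ j)
    (h1 : (Z (Sx stdv)) i = 0) (t : ℝ) (ht : 0 < t) :
    coefA Z i i t = 0 ∧ coefA Z i j t = 0 := by
  have hG := continuous_G hc i
  have hG0 : Z (Sx (vD i 0)) = 0 := by
    refine hs _ (isPolytope_Sx _) ?_
    let f : En n →ᵃ[ℝ] ℝ := (EuclideanSpace.proj i : En n →L[ℝ] ℝ).toLinearMap.toAffineMap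
    refine finrank_of_affine f (affine_zero_hull f ?_) (a := stdv i) ?_
      (polytope_basics (isPolytope_Sx _)).2.2
    · rintro _ ⟨k, rfl⟩
      refine Fin.cases ?_ (fun k => ?_) k
      · simp [f]
      · by_cases hk : k = i
        · subst hk; simp [f, vD]
        · simp [f, vD, hk, stdv, Ne.symm hk]
    · simp [f, stdv]
  have hcoord : ∀ k : Fin n, Continuous (fun D : ℝ => (Z (Sx (vD i D))) k) := by
    intro k
    exact (EuclideanSpace.proj k : En n →L[ℝ] ℝ).continuous.comp hG
  refine func_eq (α := coefA Z i i) (β := coefA Z i j) ?_ ?_ ?_ ?_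
    (fun x y hx hy => (coef_rel hn hZ hs hcov i j hij x y hx hy).1)
    (fun x y hx hy => (coef_rel hn hZ hs hcov i j hij x y hx hy).2) t ht
  · have : (fun t => t * coefA Z i i t) = (fun D : ℝ => (Z (Sx (vD i D))) i) := by
      funext t
      unfold coefA
      by_cases h0 : t = 0
      · rw [h0, hG0]; simp
      · rw [if_pos rfl]; field_simp
    rw [this]
    exact hcoord i
  · have : coefA Z i j = (fun D : ℝ => (Z (Sx (vD i D))) j) := by
      funext t
      unfold coefA
      rw [if_neg hij.symm, mul_one]
    rw [this]
    exact hcoord j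
  · unfold coefA; rw [hG0]; simp
  · have : vD i 1 = (stdv : Fin n → En n) := by simp [vD]
    unfold coefA
    rw [this, h1, zero_mul]

theorem Sx_zero {n : ℕ} (hn : 2 ≤ n) {Z : Set (En n) → En n}
    (hc : Continuous (fun K : PolySp n => Z (K.1 : Set (En n)))) (hZ : IsPolyValuation Z)
    (hs : SimpleVal Z) (hcov : IsPolySLCovariant Z) (i : Fin n)
    (h1 : (Z (Sx stdv)) i = 0) (v : Fin n → En n) (hv : dt v ≠ 0) : Z (Sx v) = 0 := by
  have : Nontrivial (Fin n) := Fin.nontrivial_iff_two_le.2 hn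
  obtain ⟨j, hj⟩ := exists_ne i
  have pos : ∀ v : Fin n → En n, 0 < dt v → Z (Sx v) = 0 := by
    intro v hv
    rw [Z_Sx hcov i v hv.ne']
    refine Finset.sum_eq_zero (fun k _ => ?_)
    by_cases hk : k = i
    · rw [hk, (coef_zero hn hc hZ hs hcov i j hj.symm h1 _ hv).1, zero_smul]
    · rw [(coef_zero hn hc hZ hs hcov i k (Ne.symm hk) h1 _ hv).2, zero_smul]
  rcases lt_or_gt_of_ne hv with h | h
  · have h2 := pos (v ∘ Equiv.swap i j) (by
      rw [AlternatingMap.map_swap _ _ hj.symm]; linarith)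
    have : Sx (v ∘ Equiv.swap i j) = Sx v := by
      unfold Sx
      rw [Fin.range_cons, Fin.range_cons, (Equiv.swap i j).surjective.range_comp]
    rwa [this] at h2
  · exact pos v h

theorem poly_zero {n : ℕ} (hn : 2 ≤ n) {Z : Set (En n) → En n}
    (hc : Continuous (fun K : PolySp n => Z (K.1 : Set (En n)))) (hZ : IsPolyValuation Z)
    (hs : SimpleVal Z) (hcov : IsPolySLCovariant Z) (i : Fin n)
    (h1 : (Z (Sx stdv)) i = 0) (Q : Set (En n)) (hQ : IsPolytope Q) : Z Q = 0 := by
  refine vanish_all hn hZ hs ?_ Q hQ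
  rintro t ht ⟨k, hk⟩
  have h2 := Sx_zero hn hc hZ hs hcov i h1 _ (dt_of_affInd t k hk ht)
  have e : range t = range (Fin.cons (0 : En n) (t ∘ k.succAbove) : Fin (n + 1) → En n) := by
    rw [Fin.range_cons, ← hk]
    ext x
    simp only [mem_range, mem_insert_iff, Function.comp]
    constructor
    · rintro ⟨l, rfl⟩
      rcases Fin.eq_self_or_eq_succAbove k l with h | ⟨m, h⟩
      · left; rw [h]
      · right; exact ⟨m, by rw [h]⟩
    · rintro (h | ⟨m, h⟩)
      · exact ⟨k, h.symm⟩
      · exact ⟨_, h⟩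
  rw [e]
  exact h2

theorem moment_std_pos {n : ℕ} (i : Fin n) : 0 < (momentSet (Sx (stdv (n := n)))) i := by
  have hb := polytope_basics (isPolytope_Sx (stdv (n := n)))
  have hintg := integrableOn_id hb.2.1
  have e : (momentSet (Sx (stdv (n := n)))) i = ∫ x in Sx (stdv (n := n)), x i := by
    unfold momentSet
    exact ((EuclideanSpace.proj i : En n →L[ℝ] ℝ).integral_comp_comm hintg).symm
  have hintg' : IntegrableOn (fun x : En n => x i) (Sx stdv) :=
    (EuclideanSpace.proj i : En n →L[ℝ] ℝ).integrable_comp hintg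
  have hnn : ∀ x ∈ Sx (stdv (n := n)), 0 ≤ x i := by
    have hcv : Convex ℝ {x : En n | 0 ≤ x i} :=
      convex_halfSpace_ge (EuclideanSpace.proj i : En n →L[ℝ] ℝ).toLinearMap.isLinear 0
    have : Sx (stdv (n := n)) ⊆ {x : En n | 0 ≤ x i} := by
      refine convexHull_min ?_ hcv
      rintro _ ⟨k, rfl⟩
      refine Fin.cases ?_ (fun k => ?_) k
      · simp
      · by_cases hk : i = k <;> simp [stdv, hk]
    exact fun x hx => this hx
  have hai := affInd_of_dt (stdv (n := n)) (by rw [dt_std]; exact one_ne_zero)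
  have htop : affineSpan ℝ (range (Fin.cons (0 : En n) stdv : Fin (n + 1) → En n)) = ⊤ := by
    rw [hai.affineSpan_eq_top_iff_card_eq_finrank_add_one]
    simp
  have hne := interior_convexHull_nonempty_iff_affineSpan_eq_top.2 htop
  have hpos : 0 < volume (interior (Sx (stdv (n := n)))) := isOpen_interior.measure_pos _ hne
  rw [e, setIntegral_pos_iff_support_of_nonneg_ae _ hintg']
  · have hz : volume {x : En n | x i = 0} = 0 := by
      have h1 : (LinearMap.ker (EuclideanSpace.proj i : En n →L[ℝ] ℝ).toLinearMap) ≠ ⊤ := by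
        intro h
        have : stdv i ∈ LinearMap.ker (EuclideanSpace.proj i : En n →L[ℝ] ℝ).toLinearMap := by
          rw [h]; trivial
        simp [stdv] at this
      exact Measure.addHaar_submodule volume _ h1
    have hsub : interior (Sx (stdv (n := n))) ⊆
        (Function.support (fun x : En n => x i) ∩ Sx stdv) ∪ {x : En n | x i = 0} := by
      intro x hx
      by_cases h : x i = 0
      · right; exact h
      · left; exact ⟨h, interior_subset hx⟩
    by_contra h
    have h0 : volume (Function.support (fun x : En n => x i) ∩ Sx stdv) = 0 := by
      simpa using h
    have := (measure_mono (μ := volume) hsub).trans (measure_union_le _ _)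
    rw [h0, hz, add_zero] at this
    exact absurd hpos (not_lt.2 this)
  · exact (ae_restrict_iff' hb.2.1.measurableSet).2 (Eventually.of_forall hnn)

theorem main_forward {n : ℕ} (hn : 2 ≤ n) (Y : Set (En n) → En n)
    (hc : Continuous (fun K : PolySp n => Y (K.1 : Set (En n)))) 
    (hs : ∀ Q : Set (En n), IsPolytope Q →
        Module.finrank ℝ (vectorSpan ℝ Q) ≤ n - 1 → Y Q = 0)
    (hY : IsPolyValuation Y) (hcov : IsPolySLCovariant Y) :
    ∃ c : ℝ, ∀ Q : Set (En n), IsPolytope Q → Y Q = c • momentSet Q := by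
  let i : Fin n := ⟨0, by omega⟩
  have hm := moment_std_pos i
  set c := (Y (Sx stdv)) i / (momentSet (Sx (stdv (n := n)))) i with hcdef
  refine ⟨c, fun Q hQ => ?_⟩
  have := poly_zero hn (Z := fun Q => Y Q - c • momentSet Q)
    (hc.sub (moment_continuous.const_smul c)) ?_ ?_ ?_ i ?_ Q hQ
  · exact sub_eq_zero.1 this
  · intro A B hA hB hU hI
    have h1 := hY A B hA hB hU hI
    have h2 := moment_valuation A B hA hB hU hI
    have h3 := congrArg (fun z => c • z) h2
    simp only [smul_add] at h3
    change (Y A - c • momentSet A) + (Y B - c • momentSet B) =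
      (Y (A ∪ B) - c • momentSet (A ∪ B)) + (Y (A ∩ B) - c • momentSet (A ∩ B))
    rw [sub_add_sub_comm, sub_add_sub_comm, h1, h3]
  · intro Q hQ hd
    simp only
    rw [hs Q hQ hd, moment_simple hn Q hd, smul_zero, sub_zero]
  · intro Q hQ ϑ hϑ
    simp only
    rw [hcov Q hQ ϑ hϑ, moment_covariant Q hQ ϑ hϑ]
    simp [matVec, map_sub, map_smul]
  · simp only [PiLp.sub_apply, PiLp.smul_apply, smul_eq_mul]
    rw [hcdef, div_mul_cancel₀ _ hm.ne', sub_self]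

theorem isPolytope_image {n : ℕ} {Q : Set (En n)} (hQ : IsPolytope Q)
    (ϑ : Matrix (Fin n) (Fin n) ℝ) : IsPolytope (matVec ϑ '' Q) := by
  obtain ⟨S, hS, rfl⟩ := hQ
  have e : matVec ϑ = (Matrix.toEuclideanLin ϑ : En n → En n) := rfl
  rw [e, LinearMap.image_convexHull]
  exact isPolytope_hull (S.finite_toSet.image _) ((Finset.coe_nonempty.2 hS).image _)

theorem main_backward {n : ℕ} (hn : 2 ≤ n) (Y : Set (En n) → En n) (c : ℝ)
    (h : ∀ Q : Set (En n), IsPolytope Q → Y Q = c • momentSet Q) :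
    (Continuous (fun K : PolySp n => Y (K.1 : Set (En n))) ∧
      (∀ Q : Set (En n), IsPolytope Q →
        Module.finrank ℝ (vectorSpan ℝ Q) ≤ n - 1 → Y Q = 0) ∧
      IsPolyValuation Y ∧ IsPolySLCovariant Y) := by
  refine ⟨?_, ?_, ?_, ?_⟩
  · have : (fun K : PolySp n => Y (K.1 : Set (En n))) =
        fun K : PolySp n => c • momentSet (K.1 : Set (En n)) := by
      funext K; exact h _ K.2
    rw [this]
    exact moment_continuous.const_smul c
  · intro Q hQ hd
    rw [h Q hQ, moment_simple hn Q hd, smul_zero]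
  · intro A B hA hB hU hI
    rw [h A hA, h B hB, h _ hU, h _ hI, ← smul_add, ← smul_add,
      moment_valuation A B hA hB hU hI]
  · intro Q hQ ϑ hϑ
    rw [h _ (isPolytope_image hQ ϑ), h Q hQ, moment_covariant Q hQ ϑ hϑ]
    simp [matVec, map_smul]

/-- For `n ≥ 2`, an operator `Y : 𝒫ⁿ → ℝⁿ` is a simple, continuous
(w.r.t. the Hausdorff metric) and `SL(n)` covariant valuation if and only if there is a
constant `c ∈ ℝ` such that `Y Q = c m(Q)` for all `Q ∈ 𝒫ⁿ`. -/
theorem statement1 (n : ℕ) (hn : 2 ≤ n) (Y : Set (En n) → En n) :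
    (Continuous (fun K : PolySp n => Y (K.1 : Set (En n))) ∧
      (∀ Q : Set (En n), IsPolytope Q →
        Module.finrank ℝ (vectorSpan ℝ Q) ≤ n - 1 → Y Q = 0) ∧
      IsPolyValuation Y ∧ IsPolySLCovariant Y) ↔
    ∃ c : ℝ, ∀ Q : Set (En n), IsPolytope Q → Y Q = c • momentSet Q := by
  exact ⟨fun ⟨h1, h2, h3, h4⟩ => main_forward hn Y h1 h2 h3 h4,
    fun ⟨c, hc⟩ => main_backward hn Y c hc⟩

end
end

section
/- Let n ≥ 2, let φ be a Young function, and let ξ : ℝ → ℝ be continuous with ξ(0) = 0. Assume that for every δ > 0 there exists λ_δ ≥ 0 such that |ξ(β)| ≤ λ_δ φ(δ|β|) for all β ∈ ℝ. Then for every h ∈ L^φ(ℝⁿ, |x|dx) the function x ↦ ξ(h(x)) x is integrable, and the operator Ψ : L^φ(ℝⁿ, |x|dx) → ℝⁿ defined by Ψ(h) = m(ξ∘h) = ∫_{ℝⁿ} ξ(h(x)) x dx is a continuous, SL(n) covariant valuation: it satisfies Ψ(h₁ ∨ h₂) + Ψ(h₁ ∧ h₂) = Ψ(h₁) + Ψ(h₂)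 for all h₁, h₂, Ψ(h∘ϑ⁻¹) = ϑ Ψ(h) for all h and all real n×n matrices ϑ with determinant 1, and Ψ(h_k) → Ψ(h) whenever ‖h_k − h‖_φ → 0. -/
open MeasureTheory Filter Set Topology TopologicalSpace
open scoped ENNReal

noncomputable section

theorem young_subgrad {φ ψ : ℝ → ℝ} (hm : MonotoneOn ψ (Set.Ici 0))
    (hφ : ∀ t : ℝ, 0 ≤ t → φ t = ∫ s in (0:ℝ)..t, ψ s) (v s : ℝ) (hv : 0 ≤ v) (hs : 0 ≤ s) :
    φ v + ψ v * (s - v) ≤ φ s := by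
  have hi : ∀ a b : ℝ, 0 ≤ a → 0 ≤ b → IntervalIntegrable ψ volume a b := by
    intro a b ha hb
    apply MonotoneOn.intervalIntegrable
    apply hm.mono
    intro x hx
    rw [Set.mem_uIcc] at hx
    rcases hx with h | h
    · exact ha.trans h.1
    · exact hb.trans h.1
  have h1 := intervalIntegral.integral_add_adjacent_intervals (hi 0 v le_rfl hv) (hi v s hv hs)
  rw [← hφ v hv, ← hφ s hs] at h1
  have h2 : ψ v * (s - v) ≤ ∫ x in v..s, ψ x := by
    rcases le_total v s with h | h
    · have := intervalIntegral.integral_mono_on (μ := volume) h (f := fun _ => ψ v) (g := ψ)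
        (by simp) (hi v s hv hs) (fun x hx => hm hv (hv.trans hx.1) hx.1)
      simp at this
      linarith
    · have := intervalIntegral.integral_mono_on (μ := volume) h (g := fun _ => ψ v) (f := ψ)
        (hi s v hs hv) (by simp) (fun x hx => hm (hs.trans hx.1) hv hx.2)
      rw [intervalIntegral.integral_symm v s] at this
      simp at this
      linarith
  linarith

/-- The consequences of the Young property which are used below. -/
structure YoungData (φ ψ : ℝ → ℝ) : Prop where
  psi_nonneg : ∀ s : ℝ, 0 ≤ s → 0 ≤ ψ s
  psi_mono : MonotoneOn ψ (Set.Ici 0)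
  sub : ∀ v s : ℝ, 0 ≤ v → 0 ≤ s → φ v + ψ v * (s - v) ≤ φ s
  zero : φ 0 = 0
  nonneg : ∀ s, 0 ≤ s → 0 ≤ φ s
  mono : MonotoneOn φ (Set.Ici 0)
  pos : ∀ s, 0 < s → 0 < φ s
  scale : ∀ e s : ℝ, 0 ≤ e → e ≤ 1 → 0 ≤ s → φ (e * s) ≤ e * φ s
  two : ∀ v : ℝ, 0 ≤ v → v * ψ v ≤ φ (2 * v)

theorem IsYoung.data {φ : ℝ → ℝ} (h : IsYoung φ) : ∃ ψ, YoungData φ ψ := by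
  obtain ⟨ψ, h0, hm, -, hz, hp, -, hφ⟩ := h
  have sub := young_subgrad hm hφ
  have zero : φ 0 = 0 := by rw [hφ 0 le_rfl]; simp
  have nonneg : ∀ s, 0 ≤ s → 0 ≤ φ s := by
    intro s hs
    have := sub 0 s le_rfl hs
    rw [zero, hz] at this
    linarith
  refine ⟨ψ, h0, hm, sub, zero, nonneg, ?_, ?_, ?_, ?_⟩
  · intro a ha b hb hab
    have := sub a b ha hb
    have := mul_nonneg (h0 a ha) (sub_nonneg.2 hab)
    linarith
  · intro s hs
    have h1 := sub (s/2) s (by linarith) hs.le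
    have h2 := nonneg (s/2) (by linarith)
    have h3 := mul_pos (hp (s/2) (by linarith)) (by linarith : 0 < s - s/2)
    linarith
  · intro e s he he1 hs
    have hes := mul_nonneg he hs
    have h1 := mul_le_mul_of_nonneg_left (sub (e*s) s hes hs) he
    have h2 := mul_le_mul_of_nonneg_left (sub (e*s) 0 hes le_rfl) (sub_nonneg.2 he1)
    rw [zero] at h2
    linarith
  · intro v hv
    have h1 := sub v (2*v) hv (by linarith)
    have := nonneg v hv
    linarith

theorem meas_of_mono {f : ℝ → ℝ} (hf : MonotoneOn f (Set.Ici 0)) {α : Type*} [MeasurableSpace α]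
    {g : α → ℝ} (hg : Measurable g) (h0 : ∀ x, 0 ≤ g x) : Measurable (fun x => f (g x)) := by
  have : Monotone (fun t => f (max t 0)) := by
    intro a b hab
    exact hf (Set.mem_Ici.2 (le_max_right _ _)) (Set.mem_Ici.2 (le_max_right _ _))
      (max_le_max_right _ hab)
  have h := this.measurable.comp hg
  convert h using 2 with x
  simp [max_eq_left (h0 x)]

/-- Modular bound from the dual norm. -/
theorem modular_le {α : Type*} [MeasurableSpace α] {μ : Measure α} {φ ψ : ℝ → ℝ}
    (Y : YoungData φ ψ) {u : α → ℝ} (hu : Measurable u) {e : ℝ} (he : 0 < e) (he1 : e ≤ 1)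
    (hfin : ∀ δ : ℝ, 0 < δ → ∫⁻ x, ENNReal.ofReal (φ (δ * |u x|)) ∂μ < ⊤)
    (hn : ∀ g : α → ℝ, Measurable g →
      ∫⁻ x, ENNReal.ofReal (conjYoung φ |g x|) ∂μ ≤ 1 →
      ∫⁻ x, ENNReal.ofReal |u x * g x| ∂μ ≤ ENNReal.ofReal e) :
    ∫⁻ x, ENNReal.ofReal (φ |u x|) ∂μ ≤ ENNReal.ofReal e := by
  have hei : 0 < e⁻¹ := inv_pos.2 he
  set v : α → ℝ := fun x => e⁻¹ * |u x| with hv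
  have v0 : ∀ x, 0 ≤ v x := fun x => mul_nonneg hei.le (abs_nonneg _)
  have vm : Measurable v := by fun_prop
  have pm : Measurable (fun x => ψ (v x)) := meas_of_mono Y.psi_mono vm v0
  have fm : Measurable (fun x => φ (v x)) := meas_of_mono Y.mono vm v0
  have p0 : ∀ x, 0 ≤ ψ (v x) := fun x => Y.psi_nonneg _ (v0 x)
  have f0 : ∀ x, 0 ≤ φ (v x) := fun x => Y.nonneg _ (v0 x)
  have c0 : ∀ x, 0 ≤ v x * ψ (v x) - φ (v x) := by
    intro x
    have := Y.sub (v x) 0 (v0 x) le_rfl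
    rw [Y.zero] at this
    linarith
  have Af : Integrable (fun x => φ (v x)) μ := by
    refine ⟨fm.aestronglyMeasurable, ?_⟩
    rw [hasFiniteIntegral_iff_ofReal (ae_of_all _ f0)]
    exact hfin _ hei
  have Cf : Integrable (fun x => v x * ψ (v x)) μ := by
    refine ⟨(vm.mul pm).aestronglyMeasurable, ?_⟩
    rw [hasFiniteIntegral_iff_ofReal (ae_of_all _ fun x => mul_nonneg (v0 x) (p0 x))]
    refine lt_of_le_of_lt (lintegral_mono fun x => ENNReal.ofReal_le_ofReal (Y.two _ (v0 x))) ?_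
    simp only [hv, ← mul_assoc]
    exact hfin _ (by positivity)
  have Bf : Integrable (fun x => v x * ψ (v x) - φ (v x)) μ := Cf.sub Af
  set A := ∫ x, φ (v x) ∂μ with hA
  set C := ∫ x, v x * ψ (v x) ∂μ with hC
  have hB : ∫ x, (v x * ψ (v x) - φ (v x)) ∂μ = C - A := integral_sub Cf Af
  have hB0 : 0 ≤ C - A := hB ▸ integral_nonneg c0
  set M := max 1 (C - A) with hM
  have M1 : 1 ≤ M := le_max_left _ _
  have M0 : 0 < M := by linarith
  have key := hn (fun x => ψ (v x) / M) (pm.div_const _) (by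
    calc ∫⁻ x, ENNReal.ofReal (conjYoung φ |ψ (v x) / M|) ∂μ
        ≤ ∫⁻ x, ENNReal.ofReal ((v x * ψ (v x) - φ (v x)) / M) ∂μ := by
          refine lintegral_mono fun x => ENNReal.ofReal_le_ofReal ?_
          rw [abs_of_nonneg (div_nonneg (p0 x) M0.le)]
          refine csSup_le ⟨_, 0, le_rfl, rfl⟩ ?_
          rintro y ⟨s, hs, rfl⟩
          have h1 := Y.sub (v x) s (v0 x) hs
          have h2 := Y.nonneg s hs
          rw [le_div_iff₀ M0, sub_mul, mul_assoc, div_mul_cancel₀ _ M0.ne']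
          nlinarith
      _ = ENNReal.ofReal (∫ x, (v x * ψ (v x) - φ (v x)) / M ∂μ) := by
          rw [ofReal_integral_eq_lintegral_ofReal (Bf.div_const M)
            (ae_of_all _ fun x => div_nonneg (c0 x) M0.le)]
      _ ≤ 1 := by
          rw [integral_div, hB, ENNReal.ofReal_le_one, div_le_one M0]
          exact le_max_right _ _)
  have h3 : ∫⁻ x, ENNReal.ofReal |u x * (ψ (v x) / M)| ∂μ = ENNReal.ofReal (e * C / M) := by
    have : ∀ x, |u x * (ψ (v x) / M)| = (e / M) * (v x * ψ (v x)) := by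
      intro x
      rw [abs_mul, abs_of_nonneg (div_nonneg (p0 x) M0.le)]
      simp only [hv]
      field_simp
    simp_rw [this]
    rw [← ofReal_integral_eq_lintegral_ofReal (Cf.const_mul _)
      (ae_of_all _ fun x => mul_nonneg (by positivity) (mul_nonneg (v0 x) (p0 x))),
      integral_const_mul]
    congr 1
    ring
  rw [h3, ENNReal.ofReal_le_ofReal_iff he.le, div_le_iff₀ M0] at key
  have key2 : C ≤ M := le_of_mul_le_mul_left key he
  have A1 : A ≤ 1 := by
    rcases max_cases 1 (C - A) with h | h <;> linarith
  calc ∫⁻ x, ENNReal.ofReal (φ |u x|) ∂μ ≤ ∫⁻ x, ENNReal.ofReal (e * φ (v x)) ∂μ := by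
        refine lintegral_mono fun x => ENNReal.ofReal_le_ofReal ?_
        have := Y.scale e (v x) he.le he1 (v0 x)
        simpa only [hv, mul_inv_cancel_left₀ he.ne'] using this
    _ = ENNReal.ofReal (e * A) := by
        rw [← ofReal_integral_eq_lintegral_ofReal (Af.const_mul _)
          (ae_of_all _ fun x => mul_nonneg he.le (f0 x)), integral_const_mul]
    _ ≤ _ := ENNReal.ofReal_le_ofReal (by nlinarith)

theorem half_bound {φ ψ : ℝ → ℝ} (Y : YoungData φ ψ) {c : ℝ} (hc : 0 ≤ c) (a b : ℝ) :
    φ (c / 2 * |a + b|) ≤ φ (c * |a|) + φ (c * |b|) := by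
  have ha := mul_nonneg hc (abs_nonneg a)
  have hb := mul_nonneg hc (abs_nonneg b)
  have hab : c / 2 * |a + b| ≤ (c * |a| + c * |b|) / 2 := by
    have := mul_le_mul_of_nonneg_left (abs_add_le a b) hc
    linarith
  have h0 : 0 ≤ c / 2 * |a + b| := by positivity
  rcases le_total (c * |a|) (c * |b|) with h | h
  · have := Y.mono h0 hb (hab.trans (by linarith))
    linarith [Y.nonneg _ ha]
  · have := Y.mono h0 ha (hab.trans (by linarith))
    linarith [Y.nonneg _ hb]

/-- Convergence of the superposition operator along modular convergence. -/
theorem superpos_tendsto {α : Type*} [MeasurableSpace α] {μ : Measure α} {φ ψ : ℝ → ℝ}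
    (Y : YoungData φ ψ) {ξ : ℝ → ℝ} (hξc : Continuous ξ)
    (hdom : ∀ δ : ℝ, 0 < δ → ∃ lam : ℝ, 0 ≤ lam ∧ ∀ β : ℝ, |ξ β| ≤ lam * φ (δ * |β|))
    {hk : ℕ → α → ℝ} {h : α → ℝ} (hkm : ∀ k, Measurable (hk k)) (hm : Measurable h)
    (hfin : ∫⁻ x, ENNReal.ofReal (φ |h x|) ∂μ < ⊤)
    (hmod : Tendsto (fun k => ∫⁻ x, ENNReal.ofReal (φ |hk k x - h x|) ∂μ) atTop (𝓝 0)) :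
    Tendsto (fun k => ∫⁻ x, ENNReal.ofReal |ξ (hk k x) - ξ (h x)| ∂μ) atTop (𝓝 0) := by
  refine tendsto_of_subseq_tendsto fun ns hns => ?_
  have hsub := hmod.comp hns
  have hex : ∀ j : ℕ, ∃ k, ∫⁻ x, ENNReal.ofReal (φ |hk (ns k) x - h x|) ∂μ
      ≤ (2⁻¹ : ℝ≥0∞) ^ j := by
    intro j
    have hp : (0 : ℝ≥0∞) < (2⁻¹ : ℝ≥0∞) ^ j := ENNReal.pow_pos (by simp) j
    exact ((ENNReal.tendsto_nhds_zero.1 hsub) _ hp).exists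
  choose ms hms using hex
  refine ⟨ms, ?_⟩
  obtain ⟨l1, hl1, hx1⟩ := hdom (1/2) (by norm_num)
  set d : ℕ → α → ℝ≥0∞ := fun j x => ENNReal.ofReal (φ |hk (ns (ms j)) x - h x|) with hd
  have dm : ∀ j, Measurable (d j) := fun j =>
    (meas_of_mono Y.mono (((hkm _).sub hm).abs) fun x => abs_nonneg _).ennreal_ofReal
  have hG : ∫⁻ x, ∑' j, d j x ∂μ ≠ ⊤ := by
    rw [lintegral_tsum fun j => (dm j).aemeasurable]
    refine ne_top_of_le_ne_top ?_ (ENNReal.tsum_le_tsum hms)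
    rw [ENNReal.tsum_geometric]
    simp
  have hae : ∀ᵐ x ∂μ, ∑' j, d j x < ⊤ :=
    ae_lt_top (Measurable.ennreal_tsum dm) hG
  have hφm : Measurable fun x => φ |h x| := meas_of_mono Y.mono hm.abs fun x => abs_nonneg _
  have b1 : ∀ a b : ℝ, |ξ a| ≤ l1 * (φ |b| + φ |a - b|) := by
    intro a b
    have h1 := half_bound Y zero_le_one b (a - b)
    simp only [one_mul, add_sub_cancel] at h1
    exact (hx1 a).trans (mul_le_mul_of_nonneg_left h1 hl1)
  set F : α → ℝ≥0∞ := fun x => ENNReal.ofReal l1 *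
    ((ENNReal.ofReal (φ |h x|) + ∑' j, d j x) + ENNReal.ofReal (φ |h x|)) with hF
  have key := tendsto_lintegral_of_dominated_convergence (μ := μ)
    (F := fun j x => ENNReal.ofReal |ξ (hk (ns (ms j)) x) - ξ (h x)|) (f := fun _ => 0) F
    (fun j => (((hξc.measurable.comp (hkm _)).sub (hξc.measurable.comp hm)).abs).ennreal_ofReal)
    (fun j => ae_of_all _ fun x => by
      have h1 := b1 (hk (ns (ms j)) x) (h x)
      have h2 := b1 (h x) (h x)
      simp only [sub_self, abs_zero, Y.zero, add_zero] at h2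
      have h3 := abs_sub (ξ (hk (ns (ms j)) x)) (ξ (h x))
      have n1 := Y.nonneg _ (abs_nonneg (h x))
      have n2 := Y.nonneg _ (abs_nonneg (hk (ns (ms j)) x - h x))
      calc ENNReal.ofReal |ξ (hk (ns (ms j)) x) - ξ (h x)|
          ≤ ENNReal.ofReal (l1 * ((φ |h x| + φ |hk (ns (ms j)) x - h x|) + φ |h x|)) :=
            ENNReal.ofReal_le_ofReal (by linarith)
        _ = ENNReal.ofReal l1 * ((ENNReal.ofReal (φ |h x|) + d j x)
              + ENNReal.ofReal (φ |h x|)) := by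
            rw [ENNReal.ofReal_mul hl1, ENNReal.ofReal_add (add_nonneg n1 n2) n1,
              ENNReal.ofReal_add n1 n2]
        _ ≤ F x := by
            simp only [hF]
            gcongr
            exact ENNReal.le_tsum j)
    (by
      simp only [hF]
      rw [lintegral_const_mul' _ _ ENNReal.ofReal_ne_top,
        lintegral_add_right _ hφm.ennreal_ofReal, lintegral_add_left hφm.ennreal_ofReal]
      exact ENNReal.mul_ne_top ENNReal.ofReal_ne_top
        (ENNReal.add_ne_top.2 ⟨ENNReal.add_ne_top.2 ⟨hfin.ne, hG⟩, hfin.ne⟩))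
    (by
      filter_upwards [hae] with x hx
      have t0 : Tendsto (fun j => d j x) atTop (𝓝 0) :=
        ENNReal.tendsto_atTop_zero_of_tsum_ne_top hx.ne
      have t1 : Tendsto (fun j => hk (ns (ms j)) x) atTop (𝓝 (h x)) := by
        rw [Metric.tendsto_nhds]
        intro η hη
        have := t0.eventually (gt_mem_nhds (ENNReal.ofReal_pos.2 (Y.pos η hη)))
        filter_upwards [this] with j hj
        rw [Real.dist_eq]
        by_contra hcon
        push Not at hcon
        exact absurd (ENNReal.ofReal_le_ofReal (Y.mono (Set.mem_Ici.2 hη.le)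
          (Set.mem_Ici.2 (abs_nonneg _)) hcon)) (not_le.2 hj)
      have t2 := (((hξc.tendsto _).comp t1).sub_const (ξ (h x))).abs
      have t3 := ENNReal.tendsto_ofReal t2
      simpa using t3)
  simpa using key

def wmeas (n : ℕ) : Measure (En n) := volume.withDensity fun x => ENNReal.ofReal ‖x‖

theorem lintegral_wmeas {n : ℕ} (f : En n → ℝ≥0∞) :
    ∫⁻ x, f x ∂(wmeas n) = ∫⁻ x, f x * ENNReal.ofReal ‖x‖ := by
  unfold wmeas
  rw [lintegral_withDensity_eq_lintegral_mul_non_measurable _ (by fun_prop)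
    (ae_of_all _ fun x => ENNReal.ofReal_lt_top)]
  simp only [Pi.mul_apply, mul_comm]

theorem MemOrlicz.integrable {n : ℕ} {φ ψ : ℝ → ℝ} (Y : YoungData φ ψ) {ξ : ℝ → ℝ}
    (hξc : Continuous ξ)
    (hdom : ∀ δ : ℝ, 0 < δ → ∃ lam : ℝ, 0 ≤ lam ∧ ∀ β : ℝ, |ξ β| ≤ lam * φ (δ * |β|))
    {h : En n → ℝ} (hh : MemOrlicz φ h) : Integrable (fun x : En n => ξ (h x) • x) := by
  obtain ⟨l, hl, hx⟩ := hdom 1 one_pos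
  refine ⟨((hξc.measurable.comp hh.1).smul measurable_id).aestronglyMeasurable, ?_⟩
  have h1 := hh.2 1 one_pos
  calc ∫⁻ x, ‖ξ (h x) • x‖ₑ
      ≤ ∫⁻ x : En n, ENNReal.ofReal l *
          (ENNReal.ofReal (φ (1 * |h x|)) * ENNReal.ofReal ‖x‖) := by
        refine lintegral_mono fun x => ?_
        rw [enorm_smul, ← mul_assoc, ← ENNReal.ofReal_mul hl, ← ofReal_norm_eq_enorm x,
          ← ofReal_norm_eq_enorm, Real.norm_eq_abs]
        gcongr
        exact hx _
    _ < ⊤ := by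
        rw [lintegral_const_mul' _ _ ENNReal.ofReal_ne_top]
        exact ENNReal.mul_lt_top ENNReal.ofReal_lt_top h1

theorem MemOrlicz.sub {n : ℕ} {φ ψ : ℝ → ℝ} (Y : YoungData φ ψ)
    {f h : En n → ℝ} (hf : MemOrlicz φ f) (hh : MemOrlicz φ h) :
    MemOrlicz φ (fun x => f x - h x) := by
  refine ⟨hf.1.sub hh.1, fun δ hδ => ?_⟩
  have a := hf.2 (2 * δ) (by positivity)
  have b := hh.2 (2 * δ) (by positivity)
  rw [← lintegral_wmeas] at a b ⊢
  refine lt_of_le_of_lt ?_ (ENNReal.add_lt_top.2 ⟨a, b⟩)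
  rw [← lintegral_add_left (meas_of_mono Y.mono (hf.1.abs.const_mul _)
    fun x => by positivity).ennreal_ofReal]
  refine lintegral_mono fun x => ?_
  have := half_bound Y (c := 2 * δ) (by positivity) (f x) (- h x)
  rw [abs_neg, ← sub_eq_add_neg, mul_div_cancel_left₀ _ two_ne_zero] at this
  exact (ENNReal.ofReal_le_ofReal this).trans ENNReal.ofReal_add_le

theorem orlicz_cont {n : ℕ} {φ ψ : ℝ → ℝ} (Y : YoungData φ ψ) {ξ : ℝ → ℝ}
    (hξc : Continuous ξ)
    (hdom : ∀ δ : ℝ, 0 < δ → ∃ lam : ℝ, 0 ≤ lam ∧ ∀ β : ℝ, |ξ β| ≤ lam * φ (δ * |β|)) :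
    OrliczContinuous φ (fun h : En n → ℝ => ∫ x : En n, ξ (h x) • x) := by
  intro hk h hkM hM hT
  have hmod : Tendsto (fun k => ∫⁻ x, ENNReal.ofReal (φ |hk k x - h x|) ∂(wmeas n))
      atTop (𝓝 0) := by
    rw [ENNReal.tendsto_nhds_zero]
    intro ε hε
    obtain ⟨e, he, he1, heε⟩ : ∃ e : ℝ, 0 < e ∧ e ≤ 1 ∧ ENNReal.ofReal e ≤ ε := by
      have hne : min ε 1 ≠ ⊤ := ne_top_of_le_ne_top ENNReal.one_ne_top (min_le_right _ _)
      refine ⟨(min ε 1).toReal, ENNReal.toReal_pos (by simp [hε.ne']) hne, ?_, ?_⟩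
      · exact ENNReal.toReal_le_of_le_ofReal zero_le_one (by simp)
      · rw [ENNReal.ofReal_toReal hne]
        exact min_le_left _ _
    filter_upwards [(ENNReal.tendsto_nhds_zero.1 hT) _ (ENNReal.ofReal_pos.2 he)] with k hkk
    have hu := (hkM k).sub Y hM
    refine (modular_le Y hu.1 he he1 ?_ ?_).trans heε
    · intro δ hδ
      rw [lintegral_wmeas]
      exact hu.2 δ hδ
    · intro g hg hg1
      rw [lintegral_wmeas] at hg1 ⊢
      refine le_trans ?_ hkk
      unfold orliczNorm
      exact le_iSup₂_of_le g ⟨hg, hg1⟩ le_rfl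
  have hfin : ∫⁻ x, ENNReal.ofReal (φ |h x|) ∂(wmeas n) < ⊤ := by
    have := hM.2 1 one_pos
    rw [lintegral_wmeas]
    simpa only [one_mul] using this
  have key := superpos_tendsto Y hξc hdom (fun k => (hkM k).1) hM.1 hfin hmod
  simp only []
  rw [tendsto_iff_edist_tendsto_0]
  refine tendsto_of_tendsto_of_tendsto_of_le_of_le tendsto_const_nhds key
    (fun _ => bot_le) fun k => ?_
  simp only []
  rw [edist_eq_enorm_sub, ← integral_sub ((hkM k).integrable Y hξc hdom)
    (hM.integrable Y hξc hdom), lintegral_wmeas]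
  refine (enorm_integral_le_lintegral_enorm _).trans (lintegral_mono fun x => ?_)
  rw [← sub_smul, enorm_smul, ← ofReal_norm_eq_enorm x, ← ofReal_norm_eq_enorm,
    Real.norm_eq_abs]

theorem matVec_mp {n : ℕ} (ϑ : Matrix (Fin n) (Fin n) ℝ) (hd : ϑ.det = 1) :
    Measure.map (matVec ϑ) (volume : Measure (En n)) = volume := by
  have hdet : LinearMap.det (Matrix.toEuclideanLin ϑ) = 1 := by
    rw [Matrix.toEuclideanLin_eq_toLin, LinearMap.det_toLin, hd]
  have := Measure.map_linearMap_addHaar_eq_smul_addHaar (volume : Measure (En n))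
    (f := Matrix.toEuclideanLin ϑ) (by rw [hdet]; exact one_ne_zero)
  rw [hdet] at this
  have h2 : Measure.map (Matrix.toEuclideanLin ϑ) (volume : Measure (En n)) = volume := by
    simpa using this
  exact h2

theorem orlicz_sl {n : ℕ} {φ : ℝ → ℝ} {ξ : ℝ → ℝ} (hξc : Continuous ξ)
    (hint : ∀ h : En n → ℝ, MemOrlicz φ h → Integrable (fun x : En n => ξ (h x) • x)) :
    IsOrliczSLCovariant φ (fun h : En n → ℝ => ∫ x : En n, ξ (h x) • x) := by
  intro h hh ϑ hd
  let L : En n →L[ℝ] En n := LinearMap.toContinuousLinearMap (Matrix.toEuclideanLin ϑ)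
  have hL : ∀ x, L x = matVec ϑ x := fun x => rfl
  have hm : ∀ A : Matrix (Fin n) (Fin n) ℝ, Measurable (matVec A : En n → En n) := fun A =>
    (LinearMap.continuous_of_finiteDimensional (Matrix.toEuclideanLin A)).measurable
  have hinv : ∀ x : En n, matVec ϑ⁻¹ (matVec ϑ x) = x := by
    intro x
    have hu : IsUnit ϑ.det := by rw [hd]; exact isUnit_one
    ext i
    simp [matVec, Matrix.toLpLin_apply, Matrix.mulVec_mulVec, Matrix.nonsing_inv_mul _ hu]
  simp only []
  rw [← hL, ← L.integral_comp_comm (hint h hh)]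
  conv_lhs => rw [← matVec_mp ϑ hd]
  rw [integral_map (hm ϑ).aemeasurable]
  · simp only [hinv]
    simp only [← hL, map_smul]
  · exact ((hξc.measurable.comp (hh.1.comp (hm ϑ⁻¹))).smul measurable_id).aestronglyMeasurable

theorem orlicz_val {n : ℕ} {φ : ℝ → ℝ} {ξ : ℝ → ℝ} (hξc : Continuous ξ)
    (hint : ∀ h : En n → ℝ, MemOrlicz φ h → Integrable (fun x : En n => ξ (h x) • x)) :
    IsOrliczValuation φ (fun h : En n → ℝ => ∫ x : En n, ξ (h x) • x) := by
  intro f g hf hg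
  have i1 := hint f hf
  have i2 := hint g hg
  have hb := i1.norm.add i2.norm
  have j1 : Integrable (fun x : En n => ξ (max (f x) (g x)) • x) := by
    refine hb.mono' ((hξc.measurable.comp
      (hf.1.max hg.1)).smul measurable_id).aestronglyMeasurable (ae_of_all _ fun x => ?_)
    have n1 := norm_nonneg (ξ (f x) • x)
    have n2 := norm_nonneg (ξ (g x) • x)
    simp only [Pi.add_apply]
    rcases max_choice (f x) (g x) with h | h <;> rw [h] <;> linarith
  have j2 : Integrable (fun x : En n => ξ (min (f x) (g x)) • x) := by
    refine hb.mono' ((hξc.measurable.comp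
      (hf.1.min hg.1)).smul measurable_id).aestronglyMeasurable (ae_of_all _ fun x => ?_)
    have n1 := norm_nonneg (ξ (f x) • x)
    have n2 := norm_nonneg (ξ (g x) • x)
    simp only [Pi.add_apply]
    rcases min_choice (f x) (g x) with h | h <;> rw [h] <;> linarith
  simp only []
  rw [← integral_add j1 j2, ← integral_add i1 i2]
  congr 1
  funext x
  rcases le_total (f x) (g x) with h | h
  · rw [max_eq_right h, min_eq_left h, add_comm]
  · rw [max_eq_left h, min_eq_right h]

/-- Let `n ≥ 2`, `φ` a Young function, `ξ : ℝ → ℝ` continuous with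
`ξ(0) = 0`, and suppose that for every `δ > 0` there is `λ_δ ≥ 0` with
`|ξ(β)| ≤ λ_δ φ(δ|β|)` for all `β`. Then for every `h ∈ L^φ(ℝⁿ, |x|dx)` the function
`x ↦ ξ(h(x)) x` is integrable, and `Ψ(h) = m(ξ∘h) = ∫ ξ(h(x)) x dx` defines a continuous,
`SL(n)` covariant valuation on `L^φ(ℝⁿ, |x|dx)`. -/
theorem statement6 (n : ℕ) (hn : 2 ≤ n) (φ : ℝ → ℝ) (hφ : IsYoung φ)
    (ξ : ℝ → ℝ) (hξc : Continuous ξ) (hξ0 : ξ 0 = 0)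
    (hdom : ∀ δ : ℝ, 0 < δ → ∃ lam : ℝ, 0 ≤ lam ∧ ∀ β : ℝ, |ξ β| ≤ lam * φ (δ * |β|)) :
    (∀ h : En n → ℝ, MemOrlicz φ h → Integrable (fun x : En n => ξ (h x) • x)) ∧
    IsOrliczValuation φ (fun h : En n → ℝ => ∫ x : En n, ξ (h x) • x) ∧
    IsOrliczSLCovariant φ (fun h : En n → ℝ => ∫ x : En n, ξ (h x) • x) ∧
    OrliczContinuous φ (fun h : En n → ℝ => ∫ x : En n, ξ (h x) • x) := by
  obtain ⟨ψ, Y⟩ := hφ.data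
  have hint : ∀ h : En n → ℝ, MemOrlicz φ h → Integrable (fun x : En n => ξ (h x) • x) :=
    fun h hh => hh.integrable Y hξc hdom
  exact ⟨hint, orlicz_val hξc hint, orlicz_sl hξc hint, orlicz_cont Y hξc hdom⟩


end
end

section
/- Let n ≥ 2 and let φ be a Young function. If Ψ : L^φ(ℝⁿ, |x|dx) → ℝⁿ is a continuous and SL(n) covariant valuation (with Ψ(h₁) = Ψ(h₂) whenever h₁ = h₂ almost everywhere), then there exists a continuous function ξ : ℝ → ℝ with ξ(0) = 0 such that Ψ(α χ_Q) = ξ(α) m(Q) for every α ∈ ℝ and every compact convex polytope Q ∈ 𝒫ⁿ, where m(Q) = ∫_Q x dx. -/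
open MeasureTheory Filter Set Topology TopologicalSpace
open scoped ENNReal

noncomputable section

lemma young_intervalIntegrable {ψ : ℝ → ℝ} (hm : MonotoneOn ψ (Set.Ici 0)) {a b : ℝ}
    (ha : 0 ≤ a) (hb : 0 ≤ b) : IntervalIntegrable ψ volume a b := by
  apply MonotoneOn.intervalIntegrable
  apply hm.mono
  intro x hx
  exact le_trans (le_min ha hb) hx.1

lemma young_zero {φ : ℝ → ℝ} (hφ : IsYoung φ) : φ 0 = 0 := by
  obtain ⟨ψ, -, -, -, -, -, -, h⟩ := hφ
  rw [h 0 le_rfl]; simp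

lemma young_nonneg {φ : ℝ → ℝ} (hφ : IsYoung φ) {s : ℝ} (hs : 0 ≤ s) : 0 ≤ φ s := by
  obtain ⟨ψ, h0, -, -, -, -, -, h⟩ := hφ
  rw [h s hs]
  exact intervalIntegral.integral_nonneg hs fun u hu => h0 u hu.1

lemma young_bddAbove {φ : ℝ → ℝ} (hφ : IsYoung φ) {t : ℝ} (ht : 0 ≤ t) :
    BddAbove {y : ℝ | ∃ s : ℝ, 0 ≤ s ∧ y = s * t - φ s} := by
  have hnn := fun s hs => young_nonneg hφ (s := s) hs
  obtain ⟨ψ, h0, hm, -, -, -, htop, h⟩ := hφ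
  obtain ⟨S, hS⟩ := (tendsto_atTop.1 htop t).exists_forall_of_atTop
  set S' := max S 0 with hS'
  have hS0 : 0 ≤ S' := le_max_right _ _
  refine ⟨S' * t, ?_⟩
  rintro y ⟨s, hs, rfl⟩
  rcases le_total s S' with hle | hle
  · have := hnn s hs
    have := mul_le_mul_of_nonneg_right hle ht
    linarith
  · have h1 : φ s = φ S' + ∫ u in S'..s, ψ u := by
      rw [h s hs, h S' hS0]
      exact (intervalIntegral.integral_add_adjacent_intervals
        (young_intervalIntegrable hm le_rfl hS0) (young_intervalIntegrable hm hS0 hs)).symm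
    have h2 : ∫ u in S'..s, t ≤ ∫ u in S'..s, ψ u := by
      apply intervalIntegral.integral_mono_on hle (by simp)
        (young_intervalIntegrable hm hS0 hs)
      intro u hu
      exact hS u (le_trans (le_max_left _ _) hu.1)
    simp at h2
    have := hnn S' hS0
    nlinarith

lemma young_ineq {φ : ℝ → ℝ} (hφ : IsYoung φ) {s t : ℝ} (hs : 0 ≤ s) (ht : 0 ≤ t) :
    s * t ≤ φ s + conjYoung φ t := by
  have := le_csSup (young_bddAbove hφ ht) ⟨s, hs, rfl⟩
  unfold conjYoung
  linarith

lemma conjYoung_nonneg {φ : ℝ → ℝ} (hφ : IsYoung φ) {t : ℝ} (ht : 0 ≤ t) :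
    0 ≤ conjYoung φ t := by
  have := young_ineq hφ le_rfl ht
  rw [young_zero hφ] at this
  linarith

lemma orliczNorm_le {n : ℕ} {φ : ℝ → ℝ} (hφ : IsYoung φ) {s M : ℝ} (hs : 0 < s) (hM : 0 ≤ M)
    {D : Set (En n)} (hD : MeasurableSet D) {h : En n → ℝ}
    (hh : ∀ x, |h x| ≤ D.indicator (fun _ => M) x) :
    orliczNorm φ h ≤ ENNReal.ofReal (M / s) * (ENNReal.ofReal (φ s) * mun D + 1) := by
  unfold orliczNorm
  refine iSup₂_le fun g hg => ?_
  obtain ⟨-, hg⟩ := hg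
  have hpt : ∀ x, ENNReal.ofReal |h x * g x| * ENNReal.ofReal ‖x‖ ≤
      ENNReal.ofReal (M / s) * (D.indicator (fun x => ENNReal.ofReal (φ s) * ENNReal.ofReal ‖x‖) x +
        ENNReal.ofReal (conjYoung φ |g x|) * ENNReal.ofReal ‖x‖) := by
    intro x
    by_cases hx : x ∈ D
    · have h1 := hh x
      rw [indicator_of_mem hx] at h1 ⊢
      rw [← add_mul, ← mul_assoc, ← ENNReal.ofReal_add (young_nonneg hφ hs.le)
        (conjYoung_nonneg hφ (abs_nonneg _)), ← ENNReal.ofReal_mul (p := M / s) (by positivity)]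
      gcongr
      rw [abs_mul]
      have h2 := young_ineq hφ hs.le (abs_nonneg (g x))
      calc |h x| * |g x| ≤ M * |g x| := by gcongr
        _ = M / s * (s * |g x|) := by field_simp
        _ ≤ _ := by gcongr
    · have h1 := hh x
      rw [indicator_of_notMem hx] at h1
      have h2 : h x = 0 := abs_eq_zero.1 (le_antisymm h1 (abs_nonneg _))
      simp [h2]
  refine (lintegral_mono hpt).trans ?_
  rw [lintegral_const_mul' _ _ ENNReal.ofReal_ne_top]
  gcongr
  rw [lintegral_add_left]
  · rw [lintegral_indicator hD, lintegral_const_mul' _ _ ENNReal.ofReal_ne_top]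
    exact add_le_add le_rfl hg
  · apply Measurable.indicator _ hD
    fun_prop

lemma mun_le {n : ℕ} {R : ℝ} {D : Set (En n)} (hD : D ⊆ Metric.closedBall 0 R) :
    mun D ≤ ENNReal.ofReal R * volume D := by
  unfold mun
  calc ∫⁻ x in D, ENNReal.ofReal ‖x‖ ≤ ∫⁻ x in D, ENNReal.ofReal R := by
        apply setLIntegral_mono measurable_const
        intro x hx
        have := hD hx
        simp at this
        exact ENNReal.ofReal_le_ofReal this
    _ = _ := by simp

lemma mun_lt_top {n : ℕ} {D : Set (En n)} (hD : Bornology.IsBounded D) : mun D < ⊤ := by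
  obtain ⟨R, hR⟩ := hD.subset_closedBall 0
  exact (mun_le hR).trans_lt (ENNReal.mul_lt_top ENNReal.ofReal_lt_top hD.measure_lt_top)

lemma mem_ind {n : ℕ} {φ : ℝ → ℝ} (hφ : IsYoung φ) {D : Set (En n)} (hD : MeasurableSet D)
    (hb : Bornology.IsBounded D) (α : ℝ) : MemOrlicz φ (D.indicator fun _ => α) := by
  refine ⟨measurable_const.indicator hD, fun δ hδ => ?_⟩
  have : ∀ x : En n, ENNReal.ofReal (φ (δ * |D.indicator (fun _ => α) x|)) * ENNReal.ofReal ‖x‖ =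
      D.indicator (fun x => ENNReal.ofReal (φ (δ * |α|)) * ENNReal.ofReal ‖x‖) x := by
    intro x
    by_cases hx : x ∈ D <;> simp [hx, young_zero hφ]
  simp_rw [this]
  rw [lintegral_indicator hD, lintegral_const_mul' _ _ ENNReal.ofReal_ne_top]
  exact ENNReal.mul_lt_top ENNReal.ofReal_lt_top (mun_lt_top hb)

lemma norm_tendsto_set {n : ℕ} {φ : ℝ → ℝ} (hφ : IsYoung φ) (α : ℝ) (D : ℕ → Set (En n))
    (hD : ∀ k, MeasurableSet (D k)) (h0 : Tendsto (fun k => mun (D k)) atTop (𝓝 0)) :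
    Tendsto (fun k => orliczNorm φ (fun x => (D k).indicator (fun _ => α) x - 0)) atTop (𝓝 0) := by
  rw [ENNReal.tendsto_nhds_zero]
  intro ε hε
  obtain ⟨e, he0, heε⟩ : ∃ e : ℝ, 0 < e ∧ ENNReal.ofReal e ≤ ε := by
    rcases eq_or_ne ε ⊤ with rfl | h
    · exact ⟨1, one_pos, le_top⟩
    · exact ⟨ε.toReal, ENNReal.toReal_pos hε.ne' h, ENNReal.ofReal_toReal_le⟩
  set s := 2 * (|α| + 1) / e with hs
  have hs0 : 0 < s := by positivity
  have hlim : Tendsto (fun k => ENNReal.ofReal (φ s) * mun (D k)) atTop (𝓝 0) := by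
    have := ENNReal.Tendsto.const_mul (a := ENNReal.ofReal (φ s)) h0
      (Or.inr ENNReal.ofReal_ne_top)
    simpa using this
  filter_upwards [(ENNReal.tendsto_nhds_zero.1 hlim) 1 one_pos] with k hk
  refine (orliczNorm_le hφ hs0 (abs_nonneg α) (hD k) ?_).trans ?_
  · intro x
    by_cases hx : x ∈ D k <;> simp [hx]
  · calc _ ≤ ENNReal.ofReal (|α| / s) * (1 + 1) := by gcongr
      _ = ENNReal.ofReal (|α| / s * 2) := by
        rw [ENNReal.ofReal_mul (by positivity)]; norm_num
      _ ≤ ENNReal.ofReal e := by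
        apply ENNReal.ofReal_le_ofReal
        rw [hs]
        have : |α| / (2 * (|α| + 1) / e) * 2 = e * (|α| / (|α| + 1)) := by field_simp
        rw [this]
        have : |α| / (|α| + 1) ≤ 1 := by rw [div_le_one (by positivity)]; linarith
        nlinarith
      _ ≤ ε := heε

lemma norm_tendsto_const {n : ℕ} {φ : ℝ → ℝ} (hφ : IsYoung φ) (a : ℕ → ℝ) (α : ℝ) (D : Set (En n))
    (hD : MeasurableSet D) (hb : Bornology.IsBounded D) (h0 : Tendsto a atTop (𝓝 α)) :
    Tendsto (fun k => orliczNorm φ (fun x => D.indicator (fun _ => a k) x -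
      D.indicator (fun _ => α) x)) atTop (𝓝 0) := by
  have h1 : Tendsto (fun k => ENNReal.ofReal (|a k - α| / 1) * (ENNReal.ofReal (φ 1) * mun D + 1))
      atTop (𝓝 0) := by
    have h2 : Tendsto (fun k => ENNReal.ofReal (|a k - α| / 1)) atTop (𝓝 0) := by
      have : Tendsto (fun k => |a k - α| / 1) atTop (𝓝 0) := by
        have := (h0.sub_const α).abs
        simpa using this
      simpa using ENNReal.tendsto_ofReal this
    have := ENNReal.Tendsto.mul_const (b := ENNReal.ofReal (φ 1) * mun D + 1) h2
      (Or.inr (ENNReal.add_ne_top.2 ⟨(ENNReal.mul_lt_top ENNReal.ofReal_lt_top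
        (mun_lt_top hb)).ne, ENNReal.one_ne_top⟩))
    simpa using this
  refine tendsto_of_tendsto_of_tendsto_of_le_of_le tendsto_const_nhds h1 (fun _ => zero_le) ?_
  intro k
  apply orliczNorm_le hφ one_pos (abs_nonneg _) hD
  intro x
  by_cases hx : x ∈ D <;> simp [hx]

structure NiceNu {n : ℕ} (ν : Set (En n) → En n) : Prop where
  add : ∀ A B, MeasurableSet A → MeasurableSet B → Bornology.IsBounded A → Bornology.IsBounded B →
    Disjoint A B → ν (A ∪ B) = ν A + ν B
  null : ∀ A, MeasurableSet A → Bornology.IsBounded A → volume A = 0 → ν A = 0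
  zero : ∀ (R : ℝ) (D : ℕ → Set (En n)), (∀ k, MeasurableSet (D k)) →
    (∀ k, D k ⊆ Metric.closedBall 0 R) → Tendsto (fun k => volume (D k)) atTop (𝓝 0) →
    Tendsto (fun k => ν (D k)) atTop (𝓝 0)
  cov : ∀ A, MeasurableSet A → Bornology.IsBounded A → ∀ T : En n →ₗ[ℝ] En n,
    LinearMap.det T = 1 → ν (T '' A) = T (ν A)

/-- `v` is the density of `ν` at `x`. -/
def DensAt {n : ℕ} (ν : Set (En n) → En n) (x v : En n) : Prop :=
  ∀ ε : ℝ, 0 < ε → ∃ δ : ℝ, 0 < δ ∧ ∀ r : ℝ, 0 < r → r < δ → ∀ A : Set (En n), MeasurableSet A →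
    A ⊆ Metric.closedBall x r → ‖ν A - volume.real A • v‖ ≤ ε * r ^ n

lemma DensAt.unique {n : ℕ} {ν : Set (En n) → En n} {x v w : En n}
    (hv : DensAt ν x v) (hw : DensAt ν x w) : v = w := by
  set ω := volume.real (Metric.ball (0 : En n) 1) with hω
  have hω0 : 0 < ω := by
    rw [hω, measureReal_def]
    exact ENNReal.toReal_pos (Metric.measure_ball_pos _ _ one_pos).ne' measure_ball_lt_top.ne
  by_contra hne
  have hpos : 0 < ‖v - w‖ := norm_pos_iff.2 (sub_ne_zero.2 hne)
  set ε := ω * ‖v - w‖ / 4 with hε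
  have hε0 : 0 < ε := by positivity
  obtain ⟨δ₁, h1, hv⟩ := hv ε hε0
  obtain ⟨δ₂, h2, hw⟩ := hw ε hε0
  set r := min δ₁ δ₂ / 2 with hr
  have hm : 0 < min δ₁ δ₂ := lt_min h1 h2
  have hr0 : 0 < r := by positivity
  have hr1 : r < δ₁ := by have := min_le_left δ₁ δ₂; linarith
  have hr2 : r < δ₂ := by have := min_le_right δ₁ δ₂; linarith
  have e1 := hv r hr0 hr1 _ measurableSet_closedBall subset_rfl
  have e2 := hw r hr0 hr2 _ measurableSet_closedBall subset_rfl
  have hvol : volume.real (Metric.closedBall x r) = r ^ n * ω := by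
    rw [Measure.addHaar_real_closedBall _ _ hr0.le]; simp [hω]
  rw [hvol] at e1 e2
  have e3 : (r ^ n * ω) • (v - w) = (ν (Metric.closedBall x r) - (r ^ n * ω) • w) -
    (ν (Metric.closedBall x r) - (r ^ n * ω) • v) := by rw [smul_sub]; abel
  have e4 : ‖(r ^ n * ω) • (v - w)‖ ≤ ε * r ^ n + ε * r ^ n := by
    rw [e3]; exact (norm_sub_le _ _).trans (add_le_add e2 e1)
  rw [norm_smul, Real.norm_of_nonneg (by positivity)] at e4
  have hrn : 0 < r ^ n := by positivity
  have : r ^ n * ω * ‖v - w‖ ≤ r ^ n * ω * ‖v - w‖ / 2 := by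
    refine e4.trans (le_of_eq ?_); rw [hε]; ring
  have : 0 < r ^ n * ω * ‖v - w‖ := by positivity
  linarith

lemma DensAt.map {n : ℕ} {ν : Set (En n) → En n} (hν : NiceNu ν) {x v : En n}
    (hv : DensAt ν x v) (T : En n →ₗ[ℝ] En n) (hT : LinearMap.det T = 1) :
    DensAt ν (T x) (T v) := by
  intro ε hε
  let e : En n ≃ₗ[ℝ] En n := LinearEquiv.ofIsUnitDet (f := T) (v := EuclideanSpace.basisFun (Fin n) ℝ |>.toBasis)
    (v' := EuclideanSpace.basisFun (Fin n) ℝ |>.toBasis) (by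
      rw [LinearMap.det_toMatrix, hT]; exact isUnit_one)
  have he : ∀ z, e z = T z := fun z => rfl
  let Tc : En n →L[ℝ] En n := LinearMap.toContinuousLinearMap T
  let S : En n →L[ℝ] En n := LinearMap.toContinuousLinearMap e.symm.toLinearMap
  have hTc : ∀ z, Tc z = T z := fun z => rfl
  have hS : ∀ z, S z = e.symm z := fun z => rfl
  set K := ‖S‖ + 1 with hK
  have hK0 : 0 < K := by positivity
  obtain ⟨δ, hδ, H⟩ := hv (ε / ((‖Tc‖ + 1) * K ^ n)) (by positivity)
  refine ⟨δ / K, by positivity, fun r hr hrδ A hA hAr => ?_⟩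
  have hA' : MeasurableSet (T ⁻¹' A) := Tc.continuous.measurable hA
  have himg : T '' (T ⁻¹' A) = A := by
    apply image_preimage_eq
    intro y
    exact ⟨e.symm y, by rw [← he]; simp⟩
  have hsub : T ⁻¹' A ⊆ Metric.closedBall x (K * r) := by
    intro z hz
    have h1 : T z ∈ Metric.closedBall (T x) r := hAr hz
    rw [mem_closedBall_iff_norm] at h1 ⊢
    have h2 : z - x = S (T z - T x) := by
      rw [hS, ← he, ← he, ← map_sub]; simp
    rw [h2]
    calc _ ≤ ‖S‖ * ‖T z - T x‖ := S.le_opNorm _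
      _ ≤ K * r := by gcongr; linarith
  have hb : Bornology.IsBounded (T ⁻¹' A) := Metric.isBounded_closedBall.subset hsub
  have h1 := H (K * r) (by positivity) (by rwa [lt_div_iff₀' hK0] at hrδ) _ hA' hsub
  have h2 : ν A = T (ν (T ⁻¹' A)) := by
    rw [← hν.cov _ hA' hb T hT, himg]
  have h3 : volume.real A = volume.real (T ⁻¹' A) := by
    conv_lhs => rw [← himg]
    rw [measureReal_def, Measure.addHaar_image_linearMap, hT]
    simp [measureReal_def]
  rw [h2, h3, ← map_smul, ← map_sub, ← hTc]
  calc _ ≤ ‖Tc‖ * ‖ν (T ⁻¹' A) - volume.real (T ⁻¹' A) • v‖ := Tc.le_opNorm _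
    _ ≤ (‖Tc‖ + 1) * (ε / ((‖Tc‖ + 1) * K ^ n) * (K * r) ^ n) := by gcongr; linarith
    _ = ε * r ^ n := by rw [mul_pow]; field_simp

lemma NiceNu.sum {n : ℕ} {ν : Set (En n) → En n} (hν : NiceNu ν) {R : ℝ} (f : ℕ → Set (En n))
    (hf : ∀ i, MeasurableSet (f i)) (hR : ∀ i, f i ⊆ Metric.closedBall 0 R)
    (hd : Pairwise (Function.onFun Disjoint f)) (s : Finset ℕ) :
    ∑ i ∈ s, ν (f i) = ν (⋃ i ∈ s, f i) := by
  classical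
  induction s using Finset.induction_on with
  | empty => simp [hν.null ∅ MeasurableSet.empty Bornology.isBounded_empty measure_empty]
  | insert a s ha ih =>
    rw [Finset.sum_insert ha, ih, Finset.set_biUnion_insert, hν.add _ _ (hf a)
      (Finset.measurableSet_biUnion _ fun i _ => hf i) (Metric.isBounded_closedBall.subset (hR a))
      (Metric.isBounded_closedBall.subset (iUnion₂_subset fun i _ => hR i))]
    rw [disjoint_iUnion₂_right]
    intro i hi
    exact hd (fun h => ha (h ▸ hi))

lemma NiceNu.hasSum {n : ℕ} {ν : Set (En n) → En n} (hν : NiceNu ν) {R : ℝ} (f : ℕ → Set (En n))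
    (hf : ∀ i, MeasurableSet (f i)) (hR : ∀ i, f i ⊆ Metric.closedBall 0 R)
    (hd : Pairwise (Function.onFun Disjoint f)) :
    HasSum (fun i => ν (f i)) (ν (⋃ i, f i)) := by
  have hbd : ∀ s : Finset ℕ, (⋃ i ∈ s, f i) ⊆ Metric.closedBall 0 R :=
    fun s => iUnion₂_subset fun i _ => hR i
  have hbd' : (⋃ i, f i) ⊆ Metric.closedBall 0 R := iUnion_subset hR
  have hmeas : ∀ s : Finset ℕ, MeasurableSet (⋃ i ∈ s, f i) :=
    fun s => Finset.measurableSet_biUnion _ fun i _ => hf i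
  have hU : MeasurableSet (⋃ i, f i) := MeasurableSet.iUnion hf
  have hfin : volume (⋃ i, f i) ≠ ⊤ :=
    (measure_mono hbd').trans_lt measure_closedBall_lt_top |>.ne
  have key : ∀ s : Finset ℕ, ∑ i ∈ s, ν (f i) = ν (⋃ i, f i) - ν ((⋃ i, f i) \ ⋃ i ∈ s, f i) := by
    intro s
    rw [hν.sum f hf hR hd s, eq_sub_iff_add_eq, ← hν.add _ _ (hmeas s) (hU.diff (hmeas s))
      (Metric.isBounded_closedBall.subset (hbd s))
      (Metric.isBounded_closedBall.subset (sdiff_subset.trans hbd')) disjoint_sdiff_right]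
    congr 1
    exact union_sdiff_cancel (iUnion₂_subset fun i _ => subset_iUnion f i)
  have hvol : Tendsto (fun s : Finset ℕ => volume ((⋃ i, f i) \ ⋃ i ∈ s, f i)) atTop (𝓝 0) := by
    have h1 : Tendsto (fun s : Finset ℕ => ∑ i ∈ s, volume (f i)) atTop (𝓝 (volume (⋃ i, f i))) := by
      rw [measure_iUnion hd hf]
      exact ENNReal.summable.hasSum
    have h2 : ∀ s : Finset ℕ, volume ((⋃ i, f i) \ ⋃ i ∈ s, f i) =
        volume (⋃ i, f i) - ∑ i ∈ s, volume (f i) := by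
      intro s
      rw [measure_sdiff (iUnion₂_subset fun i _ => subset_iUnion f i) (hmeas s).nullMeasurableSet
        ((measure_mono (hbd s)).trans_lt measure_closedBall_lt_top |>.ne),
        measure_biUnion_finset (fun i _ j _ hij => hd hij) (fun i _ => hf i)]
    simp_rw [h2]
    have := ENNReal.Tendsto.sub (tendsto_const_nhds (x := volume (⋃ i, f i))) h1 (Or.inl hfin)
    simpa using this
  have hz : Tendsto (fun s : Finset ℕ => ν ((⋃ i, f i) \ ⋃ i ∈ s, f i)) atTop (𝓝 0) := by
    apply tendsto_of_seq_tendsto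
    intro u hu
    exact hν.zero R _ (fun k => hU.diff (hmeas _)) (fun k => sdiff_subset.trans hbd') (hvol.comp hu)
  change Tendsto (fun s : Finset ℕ => ∑ i ∈ s, ν (f i)) atTop _
  simp_rw [key]
  simpa using hz.const_sub (ν (⋃ i, f i))

open Classical in
/-- The signed measure given by a coordinate of `ν` on a ball. -/
def NiceNu.sm {n : ℕ} {ν : Set (En n) → En n} (hν : NiceNu ν) (R : ℝ) (i : Fin n) :
    SignedMeasure (En n) where
  measureOf' A := if MeasurableSet A then (ν (A ∩ Metric.closedBall 0 R)) i else 0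
  empty' := by
    simp [hν.null ∅ MeasurableSet.empty Bornology.isBounded_empty measure_empty]
  not_measurable' A hA := by simp [hA]
  m_iUnion' f hf hd := by
    simp only [hf, MeasurableSet.iUnion hf, if_true]
    have h := hν.hasSum (R := R) (fun i => f i ∩ Metric.closedBall 0 R)
      (fun i => (hf i).inter measurableSet_closedBall) (fun i => inter_subset_right)
      (fun a b hab => (hd hab).mono inter_subset_left inter_subset_left)
    rw [← iUnion_inter] at h
    exact h.mapL (EuclideanSpace.proj i : En n →L[ℝ] ℝ)

open Classical in
lemma NiceNu.density {n : ℕ} {ν : Set (En n) → En n} (hν : NiceNu ν) (R : ℝ) :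
    ∃ f : En n → En n, Integrable f ∧ ∀ A, MeasurableSet A → A ⊆ Metric.closedBall 0 R →
      ν A = ∫ x in A, f x := by
  have hac : ∀ i, hν.sm R i ≪ᵥ (volume : Measure (En n)).toENNRealVectorMeasure := by
    intro i
    refine VectorMeasure.AbsolutelyContinuous.mk fun A hA h0 => ?_
    rw [Measure.toENNRealVectorMeasure_apply_measurable hA] at h0
    change (if MeasurableSet A then (ν (A ∩ Metric.closedBall 0 R)) i else 0) = 0
    rw [if_pos hA, hν.null _ (hA.inter measurableSet_closedBall)
      (Metric.isBounded_closedBall.subset inter_subset_right) (measure_mono_null inter_subset_left h0)]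
    rfl
  have hrn := fun i => SignedMeasure.withDensityᵥ_rnDeriv_eq _ _ (hac i)
  have hint : ∀ i, Integrable ((hν.sm R i).rnDeriv volume) :=
    fun i => SignedMeasure.integrable_rnDeriv _ _
  have hfi : Integrable (fun x => (WithLp.toLp 2 fun i => (hν.sm R i).rnDeriv volume x : En n)) := by
    exact Integrable.of_eval_piLp hint
  refine ⟨fun x => WithLp.toLp 2 fun i => (hν.sm R i).rnDeriv volume x, hfi, ?_⟩
  intro A hA hAR
  ext i
  have h1 : (ν A) i = hν.sm R i A := by
    change _ = (if MeasurableSet A then (ν (A ∩ Metric.closedBall 0 R)) i else 0)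
    rw [if_pos hA, inter_eq_self_of_subset_left hAR]
  rw [h1, ← hrn i, withDensityᵥ_apply (hint i) hA]
  have := (EuclideanSpace.proj i : En n →L[ℝ] ℝ).integral_comp_comm (μ := volume.restrict A)
    hfi.integrableOn
  exact this

lemma densAt_ae {n : ℕ} {ν : Set (En n) → En n} {R : ℝ} {f : En n → En n} (hf : Integrable f)
    (h : ∀ A, MeasurableSet A → A ⊆ Metric.closedBall 0 R → ν A = ∫ x in A, f x) :
    ∀ᵐ x : En n, x ∈ Metric.ball 0 R → DensAt ν x (f x) := by
  filter_upwards [IsUnifLocDoublingMeasure.ae_tendsto_average_norm_sub volume hf.locallyIntegrable 1]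
    with x hx hxR ε hε
  have hlim := hx (l := 𝓝[>] (0:ℝ)) (fun _ => x) (fun r => r) tendsto_id (by
    filter_upwards [self_mem_nhdsWithin] with r hr
    simp [le_of_lt (mem_Ioi.1 hr)])
  set ω := volume.real (Metric.ball (0 : En n) 1) with hω
  have hω0 : 0 < ω := by
    rw [hω, measureReal_def]
    exact ENNReal.toReal_pos (Metric.measure_ball_pos _ _ one_pos).ne' measure_ball_lt_top.ne
  have hev := (tendsto_order.1 hlim).2 (ε / ω) (by positivity)
  rw [eventually_nhdsWithin_iff, Metric.eventually_nhds_iff] at hev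
  obtain ⟨δ, hδ, H⟩ := hev
  have hxR' : ‖x‖ < R := by simpa using hxR
  refine ⟨min δ (R - ‖x‖), lt_min hδ (by linarith), fun r hr hrδ A hA hAr => ?_⟩
  have hr1 : r < δ := hrδ.trans_le (min_le_left _ _)
  have hr2 : r < R - ‖x‖ := hrδ.trans_le (min_le_right _ _)
  have h1 := H (y := r) (by simpa [abs_of_pos hr] using hr1) hr
  have hAR : A ⊆ Metric.closedBall 0 R :=
    hAr.trans (Metric.closedBall_subset_closedBall' (by simp; linarith))
  have hvol : volume.real (Metric.closedBall x r) = r ^ n * ω := by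
    rw [Measure.addHaar_real_closedBall _ _ hr.le]; simp [hω]
  rw [setAverage_eq, hvol, smul_eq_mul, inv_mul_lt_iff₀ (by positivity)] at h1
  have hAfin : volume A ≠ ⊤ := ((measure_mono hAr).trans_lt measure_closedBall_lt_top).ne
  have hI : IntegrableOn (fun y => ‖f y - f x‖) (Metric.closedBall x r) :=
    (hf.integrableOn.sub (integrableOn_const measure_closedBall_lt_top.ne)).norm
  have h2 : ν A - volume.real A • f x = ∫ y in A, (f y - f x) := by
    rw [h A hA hAR, integral_sub hf.integrableOn (integrableOn_const hAfin), setIntegral_const]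
  rw [h2]
  calc _ ≤ ∫ y in A, ‖f y - f x‖ := norm_integral_le_integral_norm _
    _ ≤ ∫ y in Metric.closedBall x r, ‖f y - f x‖ :=
      setIntegral_mono_set hI (Eventually.of_forall fun _ => norm_nonneg _) (LE.le.eventuallyLE hAr)
    _ ≤ r ^ n * ω * (ε / ω) := h1.le
    _ = ε * r ^ n := by field_simp

lemma exists_dual {n : ℕ} {x y : En n} (h : y ∉ Submodule.span ℝ {x}) :
    ∃ f : Module.Dual ℝ (En n), f x = 0 ∧ f y = 1 := by
  obtain ⟨f, hf, hf0⟩ := Submodule.exists_le_ker_of_notMem h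
  have hx : f x = 0 := hf0 (Submodule.mem_span_singleton_self x)
  exact ⟨(f y)⁻¹ • f, by simp [hx], by simp [hf]⟩

lemma exists_det_one {n : ℕ} {x y : En n} (hx : x ≠ 0) (h : y ∉ Submodule.span ℝ {x}) :
    ∃ T : En n →ₗ[ℝ] En n, LinearMap.det T = 1 ∧ T x = y := by
  have h' : x ∉ Submodule.span ℝ {y - x} := by
    intro hmem
    obtain ⟨a, ha⟩ := Submodule.mem_span_singleton.1 hmem
    have ha0 : a ≠ 0 := by rintro rfl; exact hx (by simpa using ha.symm)
    apply h
    refine Submodule.mem_span_singleton.2 ⟨1 + a⁻¹, ?_⟩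
    have : a⁻¹ • x = y - x := by rw [← ha]; rw [smul_smul, inv_mul_cancel₀ ha0, one_smul]; rw [ha]
    rw [add_smul, this]; simp
  obtain ⟨f, hf0, hf1⟩ := exists_dual h'
  refine ⟨LinearMap.transvection f (y - x), ?_, ?_⟩
  · rw [LinearMap.transvection.det, hf0, add_zero]
  · rw [LinearMap.transvection.apply, hf1]; simp

lemma span_ne_top {n : ℕ} (hn : 2 ≤ n) (x : En n) : Submodule.span ℝ {x} ≠ ⊤ := by
  intro h
  have h1 : Module.finrank ℝ (Submodule.span ℝ {x}) ≤ 1 := by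
    simpa using finrank_span_le_card (R := ℝ) ({x} : Set (En n))
  rw [h] at h1
  simp at h1
  omega

lemma ae_not_span {n : ℕ} (hn : 2 ≤ n) (x : En n) :
    ∀ᵐ y : En n, y ∉ Submodule.span ℝ {x} :=
  measure_eq_zero_iff_ae_notMem.1 (Measure.addHaar_submodule volume _ (span_ne_top hn x))

theorem nice_moment {n : ℕ} (hn : 2 ≤ n) {ν : Set (En n) → En n} (hν : NiceNu ν) :
    ∃ c : ℝ, ∀ A, MeasurableSet A → Bornology.IsBounded A → ν A = c • momentSet A := by
  obtain ⟨x₀, hx₀, v₀, hv₀⟩ : ∃ x₀ : En n, x₀ ≠ 0 ∧ ∃ v₀, DensAt ν x₀ v₀ := by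
    obtain ⟨f, hf, hA⟩ := hν.density 1
    by_contra hcon
    push Not at hcon
    have : ∀ᵐ x : En n, x ∉ Metric.ball (0 : En n) 1 := by
      filter_upwards [densAt_ae hf hA, ae_not_span hn 0] with x h1 h2 h3
      exact hcon x (by rintro rfl; exact h2 (Submodule.zero_mem _)) _ (h1 h3)
    exact (Metric.measure_ball_pos volume (0 : En n) one_pos).ne' (measure_eq_zero_iff_ae_notMem.2 this)
  have hspan : v₀ ∈ Submodule.span ℝ {x₀} := by
    by_contra hcon
    obtain ⟨f, hf0, hf1⟩ := exists_dual hcon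
    have h1 := hv₀.map hν (LinearMap.transvection f x₀) (by
      rw [LinearMap.transvection.det, hf0, add_zero])
    rw [LinearMap.transvection.apply, LinearMap.transvection.apply, hf0, hf1] at h1
    simp only [zero_smul, add_zero, one_smul] at h1
    exact hx₀ (by simpa using h1.unique hv₀)
  obtain ⟨c, rfl⟩ := Submodule.mem_span_singleton.1 hspan
  have hdens : ∀ᵐ y : En n, DensAt ν y (c • y) := by
    filter_upwards [ae_not_span hn x₀] with y hy
    obtain ⟨T, hT, rfl⟩ := exists_det_one hx₀ hy
    rw [← map_smul]
    exact hv₀.map hν T hT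
  refine ⟨c, fun A hA hb => ?_⟩
  obtain ⟨R, hR⟩ := hb.subset_ball 0
  obtain ⟨f, hf, hfA⟩ := hν.density R
  rw [hfA A hA (hR.trans Metric.ball_subset_closedBall), momentSet, ← integral_smul]
  apply setIntegral_congr_ae hA
  filter_upwards [hdens, densAt_ae hf hfA] with x h1 h2 hxA
  exact (h2 (hR hxA)).unique h1

lemma matVec_symm {n : ℕ} (T : En n →ₗ[ℝ] En n) (x : En n) :
    matVec (Matrix.toEuclideanLin.symm T) x = T x := by
  simp [matVec]

lemma det_symm {n : ℕ} (T : En n →ₗ[ℝ] En n) :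
    (Matrix.toEuclideanLin.symm T).det = LinearMap.det T := by
  obtain ⟨M, rfl⟩ := Matrix.toEuclideanLin.surjective T
  rw [LinearEquiv.symm_apply_apply, Matrix.toEuclideanLin_eq_toLin, LinearMap.det_toLin]

lemma matVec_mul {n : ℕ} (M N : Matrix (Fin n) (Fin n) ℝ) (x : En n) :
    matVec M (matVec N x) = matVec (M * N) x := by
  simp [matVec, Matrix.toEuclideanLin_apply]

lemma matVec_one {n : ℕ} (x : En n) : matVec (1 : Matrix (Fin n) (Fin n) ℝ) x = x := by
  simp [matVec, Matrix.toEuclideanLin_apply]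

section
variable {n : ℕ} {φ : ℝ → ℝ} {Ψ : (En n → ℝ) → En n}

lemma psi_zero (hn : 2 ≤ n) (hφ : IsYoung φ) (hcov : IsOrliczSLCovariant φ Ψ) :
    Ψ (fun _ => 0) = 0 := by
  by_contra h
  obtain ⟨y, hy⟩ : ∃ y, y ∉ Submodule.span ℝ {Ψ (fun _ => 0)} := by
    by_contra hcon
    push Not at hcon
    exact span_ne_top hn _ (Submodule.eq_top_iff'.2 hcon)
  obtain ⟨T, hT, hTy⟩ := exists_det_one h hy
  have hm : MemOrlicz φ (fun _ : En n => (0:ℝ)) := by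
    simpa using mem_ind (n := n) hφ MeasurableSet.empty Bornology.isBounded_empty 0
  have := hcov _ hm (Matrix.toEuclideanLin.symm T) (by rw [det_symm, hT])
  rw [matVec_symm, hTy] at this
  exact hy (this ▸ Submodule.mem_span_singleton_self _)

lemma psi_nice (hn : 2 ≤ n) (hφ : IsYoung φ) (hae : RespectsAE φ Ψ)
    (hval : IsOrliczValuation φ Ψ) (hcov : IsOrliczSLCovariant φ Ψ)
    (hcont : OrliczContinuous φ Ψ) (α : ℝ) :
    NiceNu (fun A => Ψ (A.indicator fun _ => α)) where
  add A B hA hB hAb hBb hd := by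
    have h := hval _ _ (mem_ind hφ hA hAb α) (mem_ind hφ hB hBb α)
    have h0 := psi_zero hn hφ hcov
    have hd' : ∀ x, x ∈ A → x ∉ B := fun x hx hx' => disjoint_left.1 hd hx hx'
    rcases le_total 0 α with hα | hα
    · have e1 : (fun x => max (A.indicator (fun _ => α) x) (B.indicator (fun _ => α) x)) =
          (A ∪ B).indicator fun _ => α := by
        ext x
        by_cases hx : x ∈ A <;> by_cases hx' : x ∈ B <;> simp [hx, hx', hα]
      have e2 : (fun x => min (A.indicator (fun _ => α) x) (B.indicator (fun _ => α) x)) =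
          fun _ => 0 := by
        ext x
        by_cases hx : x ∈ A
        · simp [hx, hd' x hx, hα]
        · by_cases hx' : x ∈ B <;> simp [hx, hx', hα]
      rw [e1, e2, h0, add_zero] at h
      exact h
    · have e1 : (fun x => min (A.indicator (fun _ => α) x) (B.indicator (fun _ => α) x)) =
          (A ∪ B).indicator fun _ => α := by
        ext x
        by_cases hx : x ∈ A <;> by_cases hx' : x ∈ B <;> simp [hx, hx', hα]
      have e2 : (fun x => max (A.indicator (fun _ => α) x) (B.indicator (fun _ => α) x)) =
          fun _ => 0 := by
        ext x
        by_cases hx : x ∈ A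
        · simp [hx, hd' x hx, hα]
        · by_cases hx' : x ∈ B <;> simp [hx, hx', hα]
      rw [e1, e2, h0, zero_add] at h
      exact h
  null A hA hb h0 := by
    have hm : MemOrlicz φ (fun _ : En n => (0:ℝ)) := by
      simpa using mem_ind (n := n) hφ MeasurableSet.empty Bornology.isBounded_empty 0
    change Ψ (A.indicator fun _ => α) = 0
    rw [← psi_zero hn hφ hcov]
    apply hae _ _ (mem_ind hφ hA hb α) hm
    filter_upwards [measure_eq_zero_iff_ae_notMem.1 h0] with x hx
    simp [hx]
  zero R D hD hR h0 := by
    have hm : MemOrlicz φ (fun _ : En n => (0:ℝ)) := by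
      simpa using mem_ind (n := n) hφ MeasurableSet.empty Bornology.isBounded_empty 0
    rw [← psi_zero hn hφ hcov]
    apply hcont _ _ (fun k => mem_ind hφ (hD k) (Metric.isBounded_closedBall.subset (hR k)) α) hm
    apply norm_tendsto_set hφ α D hD
    have h1 : Tendsto (fun k => ENNReal.ofReal R * volume (D k)) atTop (𝓝 0) := by
      simpa using ENNReal.Tendsto.const_mul (a := ENNReal.ofReal R) h0
        (Or.inr ENNReal.ofReal_ne_top)
    exact tendsto_of_tendsto_of_tendsto_of_le_of_le tendsto_const_nhds h1 (fun _ => zero_le)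
      (fun k => mun_le (hR k))
  cov A hA hb T hT := by
    have hdet := det_symm T
    rw [hT] at hdet
    have h := hcov _ (mem_ind hφ hA hb α) _ hdet
    rw [matVec_symm] at h
    rw [← h]
    congr 1
    ext x
    set M := Matrix.toEuclideanLin.symm T with hM
    have hu : IsUnit M.det := by rw [hdet]; exact isUnit_one
    have hiff : x ∈ T '' A ↔ matVec M⁻¹ x ∈ A := by
      constructor
      · rintro ⟨z, hz, rfl⟩
        rw [← matVec_symm, ← hM, matVec_mul, Matrix.nonsing_inv_mul _ hu, matVec_one]
        exact hz
      · intro hx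
        refine ⟨_, hx, ?_⟩
        rw [← matVec_symm, ← hM, matVec_mul, Matrix.mul_nonsing_inv _ hu, matVec_one]
    by_cases hx : x ∈ T '' A
    · rw [indicator_of_mem hx, indicator_of_mem (hiff.1 hx)]
    · rw [indicator_of_notMem hx, indicator_of_notMem (fun h => hx (hiff.2 h))]

end

lemma exists_ref {n : ℕ} (i : Fin n) : ∃ H : Set (En n), MeasurableSet H ∧ Bornology.IsBounded H ∧
    (momentSet H) i ≠ 0 := by
  let p : En n →L[ℝ] ℝ := EuclideanSpace.proj i
  have hopen : IsOpen (Metric.ball (0 : En n) 1 ∩ {x | 0 < p x}) :=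
    Metric.isOpen_ball.inter (isOpen_lt continuous_const p.continuous)
  have hb : Bornology.IsBounded (Metric.ball (0 : En n) 1 ∩ {x | 0 < p x}) :=
    Metric.isBounded_ball.subset inter_subset_left
  refine ⟨_, hopen.measurableSet, hb, ?_⟩
  have hid : IntegrableOn (fun x : En n => x) (Metric.ball (0 : En n) 1 ∩ {x | 0 < p x}) := by
    refine ((continuous_id.continuousOn.integrableOn_compact
      (isCompact_closedBall (0 : En n) 1)).mono_set ?_)
    exact inter_subset_left.trans Metric.ball_subset_closedBall
  have h1 : (momentSet (Metric.ball (0 : En n) 1 ∩ {x | 0 < p x})) i =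
      ∫ x in Metric.ball (0 : En n) 1 ∩ {x | 0 < p x}, p x :=
    (p.integral_comp_comm hid).symm
  rw [h1]
  apply ne_of_gt
  rw [setIntegral_pos_iff_support_of_nonneg_ae]
  · have : (Function.support fun x => p x) ∩ (Metric.ball (0 : En n) 1 ∩ {x | 0 < p x}) =
        Metric.ball (0 : En n) 1 ∩ {x | 0 < p x} := by
      apply inter_eq_self_of_subset_right
      intro x hx
      exact ne_of_gt hx.2
    rw [this]
    refine hopen.measure_pos volume ?_
    refine ⟨EuclideanSpace.single i (1/2), ?_, ?_⟩
    · simp; norm_num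
    · simp [p]
  · filter_upwards [ae_restrict_mem hopen.measurableSet] with x hx
    exact le_of_lt hx.2
  · exact p.integrable_comp hid

/-- For `n ≥ 2` and a Young function `φ`, if `Ψ : L^φ(ℝⁿ, |x|dx) → ℝⁿ`
is a continuous, `SL(n)` covariant valuation, then there is a continuous `ξ : ℝ → ℝ` with
`ξ(0) = 0` such that `Ψ(α χ_Q) = ξ(α) m(Q)` for every `α ∈ ℝ` and every polytope `Q`. -/
theorem statement8 (n : ℕ) (hn : 2 ≤ n) (φ : ℝ → ℝ) (hφ : IsYoung φ)
    (Ψ : (En n → ℝ) → En n) (hae : RespectsAE φ Ψ)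
    (hval : IsOrliczValuation φ Ψ) (hcov : IsOrliczSLCovariant φ Ψ)
    (hcont : OrliczContinuous φ Ψ) :
    ∃ ξ : ℝ → ℝ, Continuous ξ ∧ ξ 0 = 0 ∧
      ∀ (α : ℝ) (Q : Set (En n)), IsPolytope Q →
        Ψ (Q.indicator fun _ => α) = ξ α • momentSet Q := by
  have hc := fun α => nice_moment hn (psi_nice hn hφ hae hval hcov hcont α)
  choose c hc using hc
  obtain ⟨H, hH, hHb, hne⟩ := exists_ref (n := n) ⟨0, by omega⟩
  have hΨ : ∀ α, (Ψ (H.indicator fun _ => α)) ⟨0, by omega⟩ / (momentSet H) ⟨0, by omega⟩ = c α := by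
    intro α
    have := hc α H hH hHb
    beta_reduce at this
    rw [this, PiLp.smul_apply, smul_eq_mul, mul_div_cancel_right₀ _ hne]
  refine ⟨c, ?_, ?_, ?_⟩
  · apply SeqContinuous.continuous
    intro a α ha
    have h1 := hcont _ _ (fun k => mem_ind hφ hH hHb (a k)) (mem_ind hφ hH hHb α)
      (norm_tendsto_const hφ a α H hH hHb ha)
    have h2 := ((EuclideanSpace.proj (⟨0, by omega⟩ : Fin n) : En n →L[ℝ] ℝ).continuous.tendsto _
      |>.comp h1).div_const ((momentSet H) ⟨0, by omega⟩)
    rw [← hΨ α]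
    refine h2.congr fun k => ?_
    exact hΨ (a k)
  · rw [← hΨ 0]
    simp only [indicator_zero, psi_zero hn hφ hcov]
    simp
  · rintro α Q ⟨S, -, rfl⟩
    have hcpt : IsCompact (convexHull ℝ (S : Set (En n))) := S.finite_toSet.isCompact_convexHull ℝ
    exact hc α _ hcpt.isClosed.measurableSet hcpt.isBounded

end
end
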